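/- arXiv:1412.6908 — 2 statements merged into one kernel-verified Lean document; each statement's English description precedes it below -/
import Mathlib

section
/- For every automorphism φ of the free group F_n of finite rank n, the fixed subgroup Fix(φ) = {g ∈ F_n : φ(g) = g} has rank at most n. -/
/-- The rank of a subgroup: the minimal cardinality of a generating set.
For subgroups of free groups (which are free by Nielsen–Schreier) this is the
cardinality of a free basis. -/
noncomputable def rk {G : Type*} [Group G] (H : Subgroup G) : Cardinal :=
  ⨅ S : {S : Set G // Subgroup.closure S = H}, Cardinal.mk S.1

/-- A subgroup `H` is inert if `rk (H ⊓ K) ≤ rk K` for every finitely generated `K`. -/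
def IsInert {G : Type*} [Group G] (H : Subgroup G) : Prop :=
  ∀ K : Subgroup G, K.FG → rk (H ⊓ K) ≤ rk K

/-- `stage x i` is the subgroup generated by the first `i` elements of `x`. -/
def stage {n : ℕ} {F : Type*} [Group F] (x : Fin n → F) (i : ℕ) : Subgroup F :=
  Subgroup.closure (x '' {j | (j : ℕ) < i})

/-- `x` is an ordered free basis of `F`. -/
def IsOrderedBasis {n : ℕ} {F : Type*} [Group F] (x : Fin n → F) : Prop :=
  Function.Bijective (FreeGroup.lift x)

/-- `H` is in echelon form with respect to the ordered basis `x`: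
`rk (H ⊓ F_i) ≤ rk (H ⊓ F_{i-1}) + 1` for `i = 1, …, n`. -/
def InEchelonForm {n : ℕ} {F : Type*} [Group F] (x : Fin n → F) (H : Subgroup F) : Prop :=
  ∀ i : ℕ, i < n → rk (H ⊓ stage x (i + 1)) ≤ rk (H ⊓ stage x i) + 1

/-- `H` is an echelon subgroup: it is in echelon form with respect to
some ordered free basis. -/
def IsEchelon {n : ℕ} (H : Subgroup (FreeGroup (Fin n))) : Prop :=
  ∃ x : Fin n → FreeGroup (Fin n), IsOrderedBasis x ∧ InEchelonForm x H

/-- A 1-generator (subgroup) endomorphism: an endomorphism fixing all but (possibly)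
one member of some set of free generators. -/
def IsOneGenEndo {G : Type*} [Group G] (φ : G →* G) : Prop :=
  ∃ (ι : Type) (b : FreeGroupBasis ι G) (s : Set ι),
    s.Subsingleton ∧ ∀ i ∉ s, φ (b i) = b i

/-- The subgroup of points fixed by an endomorphism. -/
def fixedSubgroup {G : Type*} [Group G] (φ : G →* G) : Subgroup G where
  carrier := {g | φ g = g}
  one_mem' := by simp
  mul_mem' := by intro a b ha hb; simp only [Set.mem_setOf_eq, map_mul] at *; rw [ha, hb]
  inv_mem' := by intro a ha; simp only [Set.mem_setOf_eq, map_inv] at *; rw [ha]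

/-- An element is primitive if it belongs to some free basis. -/
def IsPrimitive {n : ℕ} (g : FreeGroup (Fin n)) : Prop :=
  ∃ x : Fin n → FreeGroup (Fin n), IsOrderedBasis x ∧ ∃ j, x j = g


namespace FixRank

section Geometry
variable {X : Type} [DecidableEq X]

/-- `t` lies on the geodesic from `a` to `b` in the Cayley tree. -/
def Btw (a t b : FreeGroup X) : Prop :=
  (a⁻¹ * t).norm + (t⁻¹ * b).norm = (a⁻¹ * b).norm

theorem norm_inv_mul_of_head (u v : FreeGroup X)
    (h : ∀ a ∈ u.toWord.head?, ∀ b ∈ v.toWord.head?, a ≠ b) :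
    (u⁻¹ * v).norm = u.norm + v.norm := by
  have hr : FreeGroup.IsReduced (FreeGroup.invRev u.toWord ++ v.toWord) := by
    unfold FreeGroup.IsReduced
    rw [List.isChain_append]
    refine ⟨?_, FreeGroup.isReduced_toWord, ?_⟩
    · have := FreeGroup.isReduced_toWord (x := u⁻¹)
      rwa [FreeGroup.toWord_inv] at this
    · intro x hx y hy hxy
      simp only [FreeGroup.invRev, List.getLast?_reverse, List.head?_map, Option.mem_def,
        Option.map_eq_some_iff] at hx
      obtain ⟨a, ha, rfl⟩ := hx
      have := h a ha y hy
      rcases a with ⟨a1, a2⟩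
      rcases y with ⟨y1, y2⟩
      simp only at hxy
      subst hxy
      simp at this
      cases a2 <;> cases y2 <;> simp_all
  have : (u⁻¹ * v).toWord = FreeGroup.invRev u.toWord ++ v.toWord := by
    rw [FreeGroup.toWord_mul, FreeGroup.toWord_inv, hr.reduce_eq]
  simp [FreeGroup.norm, this]

theorem head_of_norm_inv_mul (u v : FreeGroup X)
    (h : (u⁻¹ * v).norm = u.norm + v.norm) :
    ∀ a ∈ u.toWord.head?, ∀ b ∈ v.toWord.head?, a ≠ b := by
  rintro a ha b hb rfl
  obtain ⟨u', hu'⟩ : ∃ u', u.toWord = a :: u' := by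
    cases hu : u.toWord with
    | nil => simp [hu] at ha
    | cons c l => simp [hu] at ha; exact ⟨l, by rw [ha]⟩
  obtain ⟨v', hv'⟩ : ∃ v', v.toWord = a :: v' := by
    cases hu : v.toWord with
    | nil => simp [hu] at hb
    | cons c l => simp [hu] at hb; exact ⟨l, by rw [hb]⟩
  have e1 : u = FreeGroup.mk [a] * FreeGroup.mk u' := by
    rw [FreeGroup.mul_mk, List.singleton_append, ← hu', FreeGroup.mk_toWord]
  have e2 : v = FreeGroup.mk [a] * FreeGroup.mk v' := by
    rw [FreeGroup.mul_mk, List.singleton_append, ← hv', FreeGroup.mk_toWord]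
  have e3 : u⁻¹ * v = (FreeGroup.mk u')⁻¹ * FreeGroup.mk v' := by
    rw [e1, e2]; group
  have n1 : u.norm = u'.length + 1 := by simp [FreeGroup.norm, hu']
  have n2 : v.norm = v'.length + 1 := by simp [FreeGroup.norm, hv']
  have := FreeGroup.norm_mul_le (FreeGroup.mk u')⁻¹ (FreeGroup.mk v')
  rw [← e3, FreeGroup.norm_inv_eq] at this
  have h1 : (FreeGroup.mk u').norm ≤ u'.length := FreeGroup.norm_mk_le
  have h2 : (FreeGroup.mk v').norm ≤ v'.length := FreeGroup.norm_mk_le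
  omega

theorem Btw.left_mul {a t b : FreeGroup X} (g : FreeGroup X) (h : Btw a t b) :
    Btw (g * a) (g * t) (g * b) := by
  unfold Btw at *
  simpa [mul_assoc] using h

theorem Btw.of_left_mul {a t b : FreeGroup X} (g : FreeGroup X)
    (h : Btw (g * a) (g * t) (g * b)) : Btw a t b := by
  unfold Btw at *
  simpa [mul_assoc] using h

theorem norm_inv_mul_comm (a b : FreeGroup X) : (a⁻¹ * b).norm = (b⁻¹ * a).norm := by
  rw [← FreeGroup.norm_inv_eq]; simp

theorem norm_tri (a t b : FreeGroup X) :
    (a⁻¹ * b).norm ≤ (a⁻¹ * t).norm + (t⁻¹ * b).norm := by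
  have := FreeGroup.norm_mul_le (a⁻¹ * t) (t⁻¹ * b)
  simpa [mul_assoc] using this

theorem Btw.symm {a t b : FreeGroup X} (h : Btw a t b) : Btw b t a := by
  unfold Btw at *
  rw [norm_inv_mul_comm b t, norm_inv_mul_comm t a, norm_inv_mul_comm b a]; omega

theorem Btw.left_mem (a b : FreeGroup X) : Btw a a b := by simp [Btw]
theorem Btw.right_mem (a b : FreeGroup X) : Btw a b b := by simp [Btw]

/-- tripod property of trees -/
theorem Btw.split {a t c : FreeGroup X} (h : Btw a t c) (b : FreeGroup X) :
    Btw a t b ∨ Btw b t c := by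
  have key : ∀ u v w : FreeGroup X, (u⁻¹ * v).norm = u.norm + v.norm →
      (u⁻¹ * w).norm = u.norm + w.norm ∨ (w⁻¹ * v).norm = w.norm + v.norm := by
    intro u v w huv
    by_contra! hcon
    obtain ⟨h1, h2⟩ := hcon
    have h1' := mt (norm_inv_mul_of_head u w) h1
    have h2' := mt (norm_inv_mul_of_head w v) h2
    push Not at h1' h2'
    obtain ⟨x, hx, y, hy, rfl⟩ := h1'
    obtain ⟨x', hx', y', hy', rfl⟩ := h2'
    have : x = x' := by
      simp only [Option.mem_def] at hy hx'; rw [hy] at hx'; exact Option.some.inj hx'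
    subst this
    exact head_of_norm_inv_mul u v huv x hx x hy' rfl
  have conv : ∀ p q : FreeGroup X, Btw p t q ↔
      ((t⁻¹ * p)⁻¹ * (t⁻¹ * q)).norm = (t⁻¹ * p).norm + (t⁻¹ * q).norm := by
    intro p q
    unfold Btw
    rw [norm_inv_mul_comm t p]
    have : (t⁻¹ * p)⁻¹ * (t⁻¹ * q) = p⁻¹ * q := by group
    rw [this]; exact eq_comm
  rw [conv] at h
  rw [conv, conv]
  exact key _ _ _ h

theorem Btw.trans_left {a t b c : FreeGroup X} (h1 : Btw a t b) (h2 : Btw a b c) :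
    Btw a t c := by
  have := norm_tri a t c
  have := norm_tri t b c
  unfold Btw at *; omega

/-- if `t'` is on `[a,g]` and `t` is on `[t',g]`, then `t'` is on `[a,t]`. -/
theorem Btw.nested {a t t' g : FreeGroup X} (h1 : Btw a t' g) (h2 : Btw t' t g) :
    Btw a t' t := by
  have := norm_tri a t' t
  have := norm_tri a t g
  unfold Btw at *; omega

theorem exists_prefix (g : FreeGroup X) (j : ℕ) (hj : j ≤ g.norm) :
    ∃ t, Btw 1 t g ∧ t.norm = j := by
  refine ⟨FreeGroup.mk (g.toWord.take j), ?_⟩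
  have e : g = FreeGroup.mk (g.toWord.take j) * FreeGroup.mk (g.toWord.drop j) := by
    rw [FreeGroup.mul_mk, List.take_append_drop, FreeGroup.mk_toWord]
  set t := FreeGroup.mk (g.toWord.take j)
  set s := FreeGroup.mk (g.toWord.drop j)
  have h1 : t.norm ≤ (g.toWord.take j).length := FreeGroup.norm_mk_le
  have h2 : s.norm ≤ (g.toWord.drop j).length := FreeGroup.norm_mk_le
  have h3 : g.norm = g.toWord.length := rfl
  have h4 := FreeGroup.norm_mul_le t s
  rw [← e] at h4
  have h5 : t⁻¹ * g = s := by rw [e]; group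
  simp only [List.length_take, List.length_drop] at h1 h2
  have h6 : min j g.toWord.length = j := by omega
  unfold Btw
  simp only [inv_one, one_mul]
  rw [h5]
  omega

theorem finite_norm_le [Finite X] (K : ℕ) : {u : FreeGroup X | u.norm ≤ K}.Finite := by
  have := List.finite_length_le (X × Bool) K
  exact (this.preimage (f := FreeGroup.toWord) FreeGroup.toWord_injective.injOn)

theorem exists_lip [Finite X] (θ : FreeGroup X →* FreeGroup X) :
    ∃ L : ℕ, ∀ g, (θ g).norm ≤ L * g.norm := by
  have hb : ∃ L, ∀ g : FreeGroup X, g.norm ≤ 1 → (θ g).norm ≤ L := by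
    have := ((finite_norm_le (X := X) 1).image (fun g => (θ g).norm)).bddAbove
    obtain ⟨L, hL⟩ := this
    exact ⟨L, fun g hg => hL ⟨g, hg, rfl⟩⟩
  obtain ⟨L, hL⟩ := hb
  refine ⟨L, fun g => ?_⟩
  induction hn : g.norm generalizing g with
  | zero =>
    have : g = 1 := FreeGroup.norm_eq_zero.1 hn
    simp [this]
  | succ n ih =>
    obtain ⟨t, ht, htn⟩ := exists_prefix g n (by omega)
    unfold Btw at ht
    simp only [inv_one, one_mul] at ht
    have h1 := ih t htn
    have h2 := hL (t⁻¹ * g) (by omega)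
    have h3 := FreeGroup.norm_mul_le (θ t) (θ (t⁻¹ * g))
    rw [← map_mul, mul_inv_cancel_left] at h3
    rw [mul_add, mul_one]; omega

theorem exists_near_image [Finite X] (θ : FreeGroup X →* FreeGroup X) :
    ∃ L : ℕ, ∀ a b s, Btw (θ a) s (θ b) → ∃ t, Btw a t b ∧ ((θ t)⁻¹ * s).norm ≤ L := by
  obtain ⟨L, hL⟩ := exists_lip θ
  refine ⟨L, ?_⟩
  have key : ∀ n (b : FreeGroup X), b.norm = n → ∀ s, Btw 1 s (θ b) →
      ∃ t, Btw 1 t b ∧ ((θ t)⁻¹ * s).norm ≤ L := by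
    intro n
    induction n with
    | zero =>
      intro b hb s hs
      have : b = 1 := FreeGroup.norm_eq_zero.1 hb
      subst this
      refine ⟨1, Btw.left_mem _ _, ?_⟩
      unfold Btw at hs
      simp only [inv_one, one_mul, map_one, mul_one, FreeGroup.norm_inv_eq,
        FreeGroup.norm_one] at hs ⊢
      omega
    | succ n ih =>
      intro b hb s hs
      obtain ⟨t, ht, htn⟩ := exists_prefix b n (by omega)
      rcases hs.split (θ t) with h | h
      · obtain ⟨t', ht', hl⟩ := ih t htn s h
        exact ⟨t', ht'.trans_left ht, hl⟩
      · refine ⟨t, ht, ?_⟩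
        have h1 := hL (t⁻¹ * b)
        unfold Btw at h ht
        simp only [inv_one, one_mul, map_mul, map_inv] at h ht h1
        have : (t⁻¹ * b).norm = 1 := by omega
        rw [this] at h1
        omega
  intro a b s h
  have h' := h.left_mul (θ a)⁻¹
  rw [inv_mul_cancel, ← map_inv, ← map_mul] at h'
  obtain ⟨t, ht, hl⟩ := key _ (a⁻¹ * b) rfl _ h'
  refine ⟨a * t, ?_, ?_⟩
  · have := ht.left_mul a
    simpa using this
  · simpa [mul_assoc] using hl

/-- bounded cancellation -/
theorem exists_near_geodesic [Finite X] (θ : FreeGroup X ≃* FreeGroup X) :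
    ∃ L : ℕ, ∀ a b t, Btw a t b → ∃ s, Btw (θ a) s (θ b) ∧ (s⁻¹ * θ t).norm ≤ L := by
  obtain ⟨L, hL⟩ := exists_near_image θ.symm.toMonoidHom
  obtain ⟨L', hL'⟩ := exists_lip θ.toMonoidHom
  refine ⟨L' * L, fun a b t h => ?_⟩
  obtain ⟨s, hs, hl⟩ := hL (θ a) (θ b) t (by simpa using h)
  refine ⟨s, hs, ?_⟩
  have h1 := hL' ((θ.symm.toMonoidHom s)⁻¹ * t)
  simp at h1 hl
  exact h1.trans (Nat.mul_le_mul_left _ hl)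

end Geometry

section Algebra
variable {X : Type}

theorem pow_inj_free {G : Type} [Group G] [IsMulTorsionFree G] {n : ℕ} (hn : n ≠ 0) {a b : G}
    (h : a ^ n = b ^ n) : a = b :=
  pow_left_injective hn h

theorem fix_of_pow_fix {G : Type} [Group G] (ψ : MulAut G) {p : ℕ} (hp : p.Prime) (hψ : ψ ^ p = 1)
    {i : ℕ} (hi : ¬ p ∣ i) {g : G} (hg : (ψ ^ i) g = g) : ψ g = g := by
  have hc : Nat.Coprime i p := ((Nat.Prime.coprime_iff_not_dvd hp).2 hi).symm
  obtain ⟨m, -, hm⟩ := Nat.exists_mul_mod_eq_one_of_coprime hc hp.one_lt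
  have h1 : ∀ m : ℕ, (ψ ^ (i * m)) g = g := by
    intro m
    induction m with
    | zero => simp
    | succ m ih => rw [Nat.mul_succ, pow_add, MulAut.mul_apply, hg, ih]
  have h2 := h1 m
  rw [← Nat.mod_add_div (i * m) p, hm, pow_add, pow_mul, hψ] at h2
  simpa using h2

theorem pow_fix {G : Type} [Group G] (ψ : MulAut G) {h : G} (hh : ψ h = h) (i : ℕ) :
    (ψ ^ i) h = h := by
  induction i with
  | zero => simp
  | succ i ih => rw [pow_succ, MulAut.mul_apply, hh, ih]

theorem twisted_pow {G : Type} [Group G] (θ : MulAut G) {g h u : G} (hh : θ h = h)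
    (hg : θ g = h * g * u) (k : ℕ) :
    ∃ w, (θ ^ k) g = h ^ k * g * w ∧ ∀ g' h' : G, θ h' = h' → θ g' = h' * g' * u →
      (θ ^ k) g' = h' ^ k * g' * w := by
  induction k with
  | zero => exact ⟨1, by simp, by simp⟩
  | succ k ih =>
    obtain ⟨w, hw, hw'⟩ := ih
    refine ⟨u * θ w, ?_, ?_⟩
    · rw [pow_succ', MulAut.mul_apply, hw]
      simp [hh, hg, pow_succ, mul_assoc]
    · intro g' h' hh' hg'
      rw [pow_succ', MulAut.mul_apply, hw' g' h' hh' hg']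
      simp [hh', hg', pow_succ, mul_assoc]

theorem commute_common {b h : FreeGroup X} (hc : b * h = h * b) :
    ∃ (t : FreeGroup X) (m n : ℤ), b = t ^ m ∧ h = t ^ n := by
  let S : Subgroup (FreeGroup X) := Subgroup.closure {b, h}
  have hcomm : ∀ x ∈ S, ∀ y ∈ S, x * y = y * x := by
    intro x hx y hy
    have := Subgroup.isMulCommutative_closure (k := {b, h}) (by
      intro x hx y hy
      rcases hx with rfl | hx <;> rcases hy with rfl | hy <;> simp_all)
    have h2 := this.is_comm.comm ⟨x, hx⟩ ⟨y, hy⟩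
    simpa using congrArg Subtype.val h2
  have hfree : IsFreeGroup S := inferInstance
  let B := IsFreeGroup.basis S
  have hsub : Subsingleton (IsFreeGroup.Generators S) := by
    refine ⟨fun i j => ?_⟩
    by_contra hij
    classical
    have hne : (FreeGroup.of i * FreeGroup.of j : FreeGroup (IsFreeGroup.Generators S)) ≠
        FreeGroup.of j * FreeGroup.of i := by
      intro he
      have := congrArg FreeGroup.toWord he
      simp [FreeGroup.of, FreeGroup.toWord_mk, FreeGroup.reduce.cons, FreeGroup.reduce_nil] at this
      exact hij this.1
    apply hne
    apply B.repr.symm.injective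
    rw [map_mul, map_mul]
    exact Subtype.ext (hcomm _ (B.repr.symm _).2 _ (B.repr.symm _).2)
  have hcyc : ∃ t : S, ∀ x : S, ∃ m : ℤ, x = t ^ m := by
    rcases isEmpty_or_nonempty (IsFreeGroup.Generators S) with he | ⟨⟨i⟩⟩
    · refine ⟨1, fun x => ⟨0, ?_⟩⟩
      apply B.repr.injective
      exact Subsingleton.elim _ _
    · refine ⟨B i, fun x => ?_⟩
      have : ∀ w : FreeGroup (IsFreeGroup.Generators S), ∃ m : ℤ, w = FreeGroup.of i ^ m := by
        intro w
        induction w using FreeGroup.induction_on with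
        | C1 => exact ⟨0, by simp⟩
        | of j => exact ⟨1, by rw [Subsingleton.elim j i]; simp⟩
        | inv_of j _ => exact ⟨-1, by rw [Subsingleton.elim j i]; simp⟩
        | mul x y hx hy =>
          obtain ⟨m, rfl⟩ := hx
          obtain ⟨n, rfl⟩ := hy
          exact ⟨m + n, by rw [zpow_add]⟩
      obtain ⟨m, hm⟩ := this (B.repr x)
      refine ⟨m, ?_⟩
      apply B.repr.injective
      rw [hm, map_zpow]
      simp
  obtain ⟨t, ht⟩ := hcyc
  obtain ⟨m, hm⟩ := ht ⟨b, Subgroup.subset_closure (by simp)⟩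
  obtain ⟨n, hn⟩ := ht ⟨h, Subgroup.subset_closure (by simp)⟩
  exact ⟨t, m, n, by simpa using congrArg Subtype.val hm, by simpa using congrArg Subtype.val hn⟩

theorem coset_unique (ψ : MulAut (FreeGroup X)) {p : ℕ} (hp : p.Prime) (hψ : ψ ^ p = 1)
    {i : ℕ} {g g' h h' u : FreeGroup X} (hh : ψ h = h) (hh' : ψ h' = h')
    (hg : (ψ ^ i) g = h * g * u) (hg' : (ψ ^ i) g' = h' * g' * u)
    (hne : ¬ p ∣ i ∨ h ≠ 1) : ψ (g' * g⁻¹) = g' * g⁻¹ := by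
  have hθp : (ψ ^ i) ^ p = 1 := by rw [← pow_mul, mul_comm, pow_mul, hψ, one_pow]
  by_cases hi : p ∣ i
  · have hne1 : h ≠ 1 := hne.resolve_left (not_not.2 hi)
    obtain ⟨k, rfl⟩ := hi
    rw [pow_mul, hψ, one_pow, MulAut.one_apply] at hg hg'
    set a := g' * g⁻¹ with ha
    have hu : u = g⁻¹ * h⁻¹ * g := by
      have : g⁻¹ * h⁻¹ * (h * g * u) = u := by group
      rw [← this, ← hg]
    have hu' : u = g'⁻¹ * h'⁻¹ * g' := by
      have : g'⁻¹ * h'⁻¹ * (h' * g' * u) = u := by group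
      rw [← this, ← hg']
    have h1 : h' = a * h * a⁻¹ := by
      have : g⁻¹ * h⁻¹ * g = g'⁻¹ * h'⁻¹ * g' := hu.symm.trans hu'
      have h2 : h⁻¹ = g * (g'⁻¹ * h'⁻¹ * g') * g⁻¹ := by rw [← this]; group
      have h3 : h = (g * (g'⁻¹ * h'⁻¹ * g') * g⁻¹)⁻¹ := by rw [← h2, inv_inv]
      rw [ha, h3]; group
    have h2 : h' = ψ a * h * (ψ a)⁻¹ := by
      have := congrArg ψ h1
      simpa [hh, hh'] using this
    set b := a⁻¹ * ψ a with hb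
    have hbc : b * h = h * b := by
      have h3 : a * h * a⁻¹ = ψ a * h * (ψ a)⁻¹ := h1.symm.trans h2
      have h4 : b * h = a⁻¹ * (ψ a * h * (ψ a)⁻¹) * ψ a := by rw [hb]; group
      rw [h4, ← h3, hb]; group
    obtain ⟨t, m, n, hbt, hht⟩ := commute_common hbc
    have hn : n ≠ 0 := by rintro rfl; simp at hht; exact hne1 hht
    have hbn : b ^ n = h ^ m := by rw [hbt, hht, ← zpow_mul, ← zpow_mul, mul_comm]
    have hψb : ψ b = b := by
      have h5 : (ψ b) ^ n = b ^ n := by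
        rw [← map_zpow, hbn, map_zpow, hh]
      exact zpow_left_injective hn h5
    have h6 : ∀ k : ℕ, (ψ ^ k) a = a * b ^ k := by
      intro k
      induction k with
      | zero => simp
      | succ k ih =>
        rw [pow_succ', MulAut.mul_apply, ih, map_mul, map_pow, hψb, pow_succ']
        have : ψ a = a * b := by rw [hb]; group
        rw [this, mul_assoc]
    have h7 := h6 p
    rw [hψ, MulAut.one_apply] at h7
    have h8 : b ^ p = 1 := by simpa using h7.symm
    have h9 : b = 1 := pow_inj_free hp.ne_zero (by simpa using h8)
    have : ψ a = a * b := by rw [hb]; group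
    rw [this, h9, mul_one]
  · set θ := ψ ^ i with hθ
    have e1 : θ h = h := pow_fix ψ hh i
    have e2 : θ h' = h' := pow_fix ψ hh' i
    obtain ⟨w, hw, hw'⟩ := twisted_pow θ e1 hg p
    have hw'' := hw' g' h' e2 hg'
    rw [hθp, MulAut.one_apply] at hw hw''
    have h1 : h' ^ p = ((g' * g⁻¹) * h * (g' * g⁻¹)⁻¹) ^ p := by
      rw [conj_pow]
      have a1 : h ^ p = g * w⁻¹ * g⁻¹ := by
        have : h ^ p = (h ^ p * g * w) * w⁻¹ * g⁻¹ := by group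
        rw [this, ← hw]
      have a2 : h' ^ p = g' * w⁻¹ * g'⁻¹ := by
        have : h' ^ p = (h' ^ p * g' * w) * w⁻¹ * g'⁻¹ := by group
        rw [this, ← hw'']
      rw [a1, a2]; group
    have h2 := pow_inj_free hp.ne_zero h1
    refine fix_of_pow_fix ψ hp hψ hi ?_
    rw [← hθ, map_mul, map_inv, hg, hg', h2]
    group

end Algebra

section Displacement
variable {X : Type} [DecidableEq X]

/-- A `ψ`-invariant length function. -/
def LN (ψ : MulAut (FreeGroup X)) (p : ℕ) (g : FreeGroup X) : ℕ :=
  ∑ i ∈ Finset.range p, ((ψ ^ i) g).norm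

theorem LN_psi (ψ : MulAut (FreeGroup X)) {p : ℕ} (hψ : ψ ^ p = 1) (g : FreeGroup X) :
    LN ψ p (ψ g) = LN ψ p g := by
  unfold LN
  have h1 := Finset.sum_range_succ (fun i => ((ψ ^ i) g).norm) p
  have h2 := Finset.sum_range_succ' (fun i => ((ψ ^ i) g).norm) p
  simp only [hψ, pow_zero] at h1 h2
  have h3 : ∀ i, (ψ ^ i) (ψ g) = (ψ ^ (i + 1)) g := fun i => by
    rw [pow_succ, MulAut.mul_apply]
  simp only [h3]
  omega

theorem LN_psi_pow (ψ : MulAut (FreeGroup X)) {p : ℕ} (hψ : ψ ^ p = 1) (i : ℕ)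
    (g : FreeGroup X) : LN ψ p ((ψ ^ i) g) = LN ψ p g := by
  induction i with
  | zero => simp
  | succ i ih => rw [pow_succ', MulAut.mul_apply, LN_psi ψ hψ, ih]

theorem LN_mul_le (ψ : MulAut (FreeGroup X)) (p : ℕ) (a b : FreeGroup X) :
    LN ψ p (a * b) ≤ LN ψ p a + LN ψ p b := by
  unfold LN
  rw [← Finset.sum_add_distrib]
  refine Finset.sum_le_sum fun i _ => ?_
  rw [map_mul]
  exact FreeGroup.norm_mul_le _ _

theorem LN_inv (ψ : MulAut (FreeGroup X)) (p : ℕ) (a : FreeGroup X) :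
    LN ψ p a⁻¹ = LN ψ p a := by
  unfold LN
  simp

theorem LN_comm (ψ : MulAut (FreeGroup X)) (p : ℕ) (a b : FreeGroup X) :
    LN ψ p (a⁻¹ * b) = LN ψ p (b⁻¹ * a) := by
  rw [← LN_inv]; simp

theorem LN_tri (ψ : MulAut (FreeGroup X)) (p : ℕ) (a b c : FreeGroup X) :
    LN ψ p (a⁻¹ * c) ≤ LN ψ p (a⁻¹ * b) + LN ψ p (b⁻¹ * c) := by
  have := LN_mul_le ψ p (a⁻¹ * b) (b⁻¹ * c)
  simpa [mul_assoc] using this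

theorem norm_le_LN (ψ : MulAut (FreeGroup X)) {p : ℕ} (hp : p.Prime) (g : FreeGroup X) :
    g.norm ≤ LN ψ p g := by
  unfold LN
  have := Finset.single_le_sum (f := fun i => ((ψ ^ i) g).norm) (s := Finset.range p)
    (fun _ _ => Nat.zero_le _) (Finset.mem_range.2 hp.pos)
  simpa using this

theorem exists_LN_le [Finite X] (ψ : MulAut (FreeGroup X)) (p : ℕ) :
    ∃ L, ∀ g, LN ψ p g ≤ L * g.norm := by
  choose L hL using fun i : ℕ => exists_lip (ψ ^ i : MulAut (FreeGroup X)).toMonoidHom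
  refine ⟨∑ i ∈ Finset.range p, L i, fun g => ?_⟩
  unfold LN
  rw [Finset.sum_mul]
  exact Finset.sum_le_sum fun i _ => hL i g

theorem exists_rough [Finite X] (ψ : MulAut (FreeGroup X)) (p : ℕ) :
    ∃ c, ∀ a t b, Btw a t b →
      LN ψ p (a⁻¹ * t) + LN ψ p (t⁻¹ * b) ≤ LN ψ p (a⁻¹ * b) + c := by
  choose L hL using fun i : ℕ => exists_near_geodesic (ψ ^ i : MulAut (FreeGroup X))
  refine ⟨∑ i ∈ Finset.range p, 2 * L i, fun a t b h => ?_⟩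
  unfold LN
  rw [← Finset.sum_add_distrib, ← Finset.sum_add_distrib]
  refine Finset.sum_le_sum fun i _ => ?_
  obtain ⟨s, hs, hl⟩ := hL i a b t h
  simp only [map_mul, map_inv]
  have h1 := norm_tri ((ψ ^ i) a) s ((ψ ^ i) t)
  have h2 := norm_tri ((ψ ^ i) t) s ((ψ ^ i) b)
  rw [norm_inv_mul_comm ((ψ ^ i) t) s] at h2
  unfold Btw at hs
  omega

theorem exists_near [Finite X] (ψ : MulAut (FreeGroup X)) {p : ℕ} (hp : p.Prime)
    (hψ : ψ ^ p = 1) :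
    ∃ c, ∀ (i : ℕ) (a t b), Btw a t b →
      ∃ s, Btw ((ψ ^ i) a) s ((ψ ^ i) b) ∧ LN ψ p (s⁻¹ * (ψ ^ i) t) ≤ c := by
  choose L hL using fun i : ℕ => exists_near_geodesic (ψ ^ i : MulAut (FreeGroup X))
  obtain ⟨M, hM⟩ := exists_LN_le ψ p
  refine ⟨M * ∑ i ∈ Finset.range p, L i, fun i a t b h => ?_⟩
  have e : ψ ^ i = ψ ^ (i % p) := by
    conv_lhs => rw [← Nat.mod_add_div i p, pow_add, pow_mul, hψ, one_pow, mul_one]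
  rw [e]
  obtain ⟨s, hs, hl⟩ := hL (i % p) a b t h
  refine ⟨s, hs, (hM _).trans (Nat.mul_le_mul_left _ (hl.trans ?_))⟩
  exact Finset.single_le_sum (f := fun i => L i) (s := Finset.range p)
    (fun _ _ => Nat.zero_le _) (Finset.mem_range.2 (Nat.mod_lt _ hp.pos))

theorem match_points (ψ : MulAut (FreeGroup X)) {p c e : ℕ}
    (hc : ∀ a t b, Btw a t b →
      LN ψ p (a⁻¹ * t) + LN ψ p (t⁻¹ * b) ≤ LN ψ p (a⁻¹ * b) + c)
    {g t t' : FreeGroup X} (ht : Btw 1 t g) (ht' : Btw 1 t' g)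
    (h1 : LN ψ p t ≤ LN ψ p t' + e) (h2 : LN ψ p t' ≤ LN ψ p t + e) :
    LN ψ p (t⁻¹ * t') ≤ e + c := by
  rcases ht.split t' with h | h
  · have := hc _ _ _ h
    simp only [inv_one, one_mul] at this
    omega
  · have := hc _ _ _ (ht'.nested h)
    simp only [inv_one, one_mul] at this
    rw [LN_comm]
    omega

/-- points moved a bounded amount (modulo `H`) are close to `H`. -/
theorem exists_close [Finite X] (ψ : MulAut (FreeGroup X)) {p : ℕ} (hp : p.Prime)
    (hψ : ψ ^ p = 1) (K : ℕ) :
    ∃ K3, ∀ (i : ℕ) (g h u : FreeGroup X), ψ h = h → LN ψ p u ≤ K → (ψ ^ i) g = h * g * u →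
      (¬ p ∣ i ∨ h ≠ 1) → ∃ h1, ψ h1 = h1 ∧ LN ψ p (h1⁻¹ * g) ≤ K3 := by
  have key : ∀ (i : ℕ) (u : FreeGroup X), ∃ K3, ∀ g h : FreeGroup X, ψ h = h →
      (ψ ^ i) g = h * g * u →
      (¬ p ∣ i ∨ h ≠ 1) → ∃ h1, ψ h1 = h1 ∧ LN ψ p (h1⁻¹ * g) ≤ K3 := by
    intro i u
    by_cases hex : ∃ g0 h0 : FreeGroup X, ψ h0 = h0 ∧ (ψ ^ i) g0 = h0 * g0 * u ∧
      (¬ p ∣ i ∨ h0 ≠ 1)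
    · obtain ⟨g0, h0, e1, e2, e3⟩ := hex
      refine ⟨LN ψ p g0, fun g h hh hg hne => ⟨g * g0⁻¹, ?_, ?_⟩⟩
      · exact coset_unique ψ hp hψ e1 hh e2 hg e3
      · simp
    · push Not at hex
      refine ⟨0, fun g h hh hg hne => ?_⟩
      have := hex g h hh hg
      exfalso
      rcases hne with hne | hne
      · exact hne this.1
      · exact hne this.2
  choose B hB using key
  have hfin : {u : FreeGroup X | LN ψ p u ≤ K}.Finite :=
    (finite_norm_le K).subset fun u hu => (norm_le_LN ψ hp u).trans hu
  refine ⟨∑ i ∈ Finset.range p, ∑ u ∈ hfin.toFinset, B i u, ?_⟩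
  intro i g h u hh hu hg hne
  have e : ψ ^ i = ψ ^ (i % p) := by
    conv_lhs => rw [← Nat.mod_add_div i p, pow_add, pow_mul, hψ, one_pow, mul_one]
  have hne' : ¬ p ∣ i % p ∨ h ≠ 1 := by
    rwa [(Nat.dvd_mod_iff dvd_rfl)]
  rw [e] at hg
  obtain ⟨h1, hh1, hl⟩ := hB (i % p) u g h hh hg hne'
  refine ⟨h1, hh1, hl.trans ?_⟩
  refine le_trans ?_ (Finset.single_le_sum (f := fun i => ∑ u ∈ hfin.toFinset, B i u)
    (s := Finset.range p) (fun _ _ => Nat.zero_le _) (Finset.mem_range.2 (Nat.mod_lt i hp.pos)))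
  exact Finset.single_le_sum (f := fun u => B (i % p) u)
    (s := hfin.toFinset) (fun _ _ => Nat.zero_le _) (hfin.mem_toFinset.2 hu)

/-- `H = Fix ψ` is quasiconvex. -/
theorem exists_quasiconvex [Finite X] (ψ : MulAut (FreeGroup X)) {p : ℕ} (hp : p.Prime)
    (hψ : ψ ^ p = 1) :
    ∃ K1, ∀ h t : FreeGroup X, ψ h = h → Btw 1 t h →
      ∃ h1, ψ h1 = h1 ∧ LN ψ p (h1⁻¹ * t) ≤ K1 := by
  obtain ⟨c, hc⟩ := exists_rough ψ p
  obtain ⟨c2, hc2⟩ := exists_near ψ hp hψ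
  obtain ⟨K3, hK3⟩ := exists_close ψ hp hψ (c2 + c + c2)
  refine ⟨K3, fun h t hh ht => ?_⟩
  obtain ⟨s, hs, hl⟩ := hc2 1 _ _ _ ht
  rw [pow_one, hh, map_one] at hs
  rw [pow_one] at hl
  have e1 : LN ψ p (ψ t) = LN ψ p t := LN_psi ψ hψ t
  have t1 := LN_mul_le ψ p s (s⁻¹ * ψ t)
  have t2 := LN_mul_le ψ p (ψ t) (s⁻¹ * ψ t)⁻¹
  rw [LN_inv] at t2
  have t3 : ψ t * (s⁻¹ * ψ t)⁻¹ = s := by group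
  rw [t3] at t2
  rw [mul_inv_cancel_left] at t1
  have hm := match_points ψ hc (e := c2) ht hs (by omega) (by omega)
  refine hK3 1 t 1 (t⁻¹ * ψ t) (map_one _) ?_ (by simp) (Or.inl ?_)
  · have := LN_tri ψ p t s (ψ t)
    omega
  · intro h1
    exact hp.one_lt.ne' (Nat.dvd_one.1 h1)

/-- main geometric claim -/
theorem exists_separation [Finite X] (ψ : MulAut (FreeGroup X)) {p : ℕ} (hp : p.Prime)
    (hψ : ψ ^ p = 1) :
    ∃ R, ∀ (i : ℕ) (g h : FreeGroup X), ψ h = h →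
      (∀ t, Btw (h * g) t ((ψ ^ i) g) → ∀ h1, ψ h1 = h1 → R < LN ψ p (h1⁻¹ * t)) → h = 1 := by
  obtain ⟨c, hc⟩ := exists_rough ψ p
  obtain ⟨c2, hc2⟩ := exists_near ψ hp hψ
  obtain ⟨K1, hK1⟩ := exists_quasiconvex ψ hp hψ
  obtain ⟨K3, hK3⟩ := exists_close ψ hp hψ (c2 + c + c + c2)
  obtain ⟨L, hL⟩ := exists_LN_le ψ p
  set j := c + K1 + c2 + K3 + 1 with hj
  refine ⟨L * j + c2, ?_⟩
  -- reduction to the case where `1` is a nearest point of `H`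
  suffices main : ∀ (i : ℕ) (g h : FreeGroup X), ψ h = h →
      (∀ h1, ψ h1 = h1 → LN ψ p g ≤ LN ψ p (h1⁻¹ * g)) →
      (∀ t, Btw (h * g) t ((ψ ^ i) g) → ∀ h1, ψ h1 = h1 → L * j + c2 < LN ψ p (h1⁻¹ * t)) →
      h = 1 by
    intro i g h hh hfar
    have hex : ∃ n, ∃ h1, ψ h1 = h1 ∧ LN ψ p (h1⁻¹ * g) = n := ⟨_, 1, map_one _, rfl⟩
    classical
    obtain ⟨h1, hh1, hn⟩ := Nat.find_spec hex
    have hmin := fun n => Nat.find_min' hex (m := n)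
    have hh1i : (ψ ^ i) h1 = h1 := pow_fix ψ hh1 i
    have := main i (h1⁻¹ * g) (h1⁻¹ * h * h1) (by simp [hh, hh1]) ?_ ?_
    · have h3 : h = h1 * (h1⁻¹ * h * h1) * h1⁻¹ := by group
      rw [h3, this]; group
    · intro h2 hh2
      rw [hn]
      refine hmin _ ⟨h1 * h2, by simp [hh1, hh2], ?_⟩
      congr 1; group
    · intro t ht h2 hh2
      have h3 := ht.left_mul h1
      have e1 : h1 * (h1⁻¹ * h * h1 * (h1⁻¹ * g)) = h * g := by group
      have e2 : h1 * (ψ ^ i) (h1⁻¹ * g) = (ψ ^ i) g := by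
        rw [map_mul, map_inv, hh1i]; group
      rw [e1, e2] at h3
      have := hfar _ h3 (h1 * h2) (by simp [hh1, hh2])
      simpa [mul_assoc] using this
  intro i g h hh hmin hfar
  by_contra hne
  have hgn : j ≤ g.norm := by
    have h1 := hfar _ (Btw.left_mem _ _) h hh
    rw [inv_mul_cancel_left] at h1
    have h2 := hL g
    by_contra hlt
    have : L * g.norm ≤ L * j := Nat.mul_le_mul_left _ (by omega)
    omega
  obtain ⟨t, ht, htn⟩ := exists_prefix g j hgn
  have htL : LN ψ p t ≤ L * j := by rw [← htn]; exact hL t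
  have hjt : j ≤ LN ψ p t := by rw [← htn]; exact norm_le_LN ψ hp t
  -- distance to `H` along `[1,g]`
  have hdist : ∀ s, Btw 1 s g → ∀ h1, ψ h1 = h1 → LN ψ p s ≤ LN ψ p (h1⁻¹ * s) + c := by
    intro s hs h1 hh1
    have a1 := hc _ _ _ hs
    have a2 := hmin h1 hh1
    have a3 := LN_tri ψ p h1 s g
    simp only [inv_one, one_mul] at a1
    omega
  obtain ⟨s, hs, hl⟩ := hc2 i _ _ _ ht
  rw [map_one] at hs
  have hinv : ∀ h1, ψ h1 = h1 → LN ψ p (h1⁻¹ * (ψ ^ i) t) = LN ψ p (h1⁻¹ * t) := by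
    intro h1 hh1
    have := LN_psi_pow ψ hψ i (h1⁻¹ * t)
    rw [map_mul, map_inv, pow_fix ψ hh1 i] at this
    exact this
  rcases hs.split h with h' | h'
  · obtain ⟨h1, hh1, hk⟩ := hK1 h s hh h'
    have a1 := LN_tri ψ p h1 s ((ψ ^ i) t)
    rw [hinv h1 hh1] at a1
    have a2 := hdist t ht h1 hh1
    omega
  · rcases h'.split (h * g) with h'' | h''
    · set t' := h⁻¹ * s with ht'
      have hst : s = h * t' := by rw [ht']; group
      have hbt : Btw 1 t' g := by
        apply Btw.of_left_mul h
        rw [mul_one, ← hst]; exact h''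
      have hhi : ψ h⁻¹ = h⁻¹ := by rw [map_inv, hh]
      have b1 := hdist t' hbt h⁻¹ hhi
      rw [inv_inv, ← hst] at b1
      have b2 := LN_tri ψ p 1 ((ψ ^ i) t) s
      have b3 := hinv 1 (map_one _)
      simp only [inv_one, one_mul] at b2 b3
      rw [LN_comm ψ p ((ψ ^ i) t) s] at b2
      have b4 := hdist t ht h hh
      have b5 := LN_tri ψ p h s ((ψ ^ i) t)
      rw [hinv h hh, ← ht'] at b5
      have hm := match_points ψ hc (e := c2 + c) ht hbt (by omega) (by omega)
      obtain ⟨h1, hh1, hk⟩ := hK3 i t h (t⁻¹ * t' * (s⁻¹ * (ψ ^ i) t)) hh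
        (by
          have := LN_mul_le ψ p (t⁻¹ * t') (s⁻¹ * (ψ ^ i) t)
          omega)
        (by rw [hst]; group) (Or.inr hne)
      have := hdist t ht h1 hh1
      omega
    · have a1 := hfar s h'' 1 (map_one _)
      have b2 := LN_tri ψ p 1 ((ψ ^ i) t) s
      have b3 := hinv 1 (map_one _)
      simp only [inv_one, one_mul] at a1 b2 b3
      rw [LN_comm ψ p ((ψ ^ i) t) s] at b2
      omega

end Displacement

section Extension

theorem sum_invariant {Q : Type} {p : ℕ} (hp : p.Prime) (σ : Equiv.Perm Q) (hσ : σ ^ p = 1)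
    (s : Finset Q) (F : Q → ZMod p) (hs : ∀ q, q ∈ s ↔ σ q ∈ s) (hF : ∀ q, F (σ q) = F q)
    (hfix : ∀ q ∈ s, σ q ≠ q) : ∑ q ∈ s, F q = 0 := by
  classical
  haveI : Fact p.Prime := ⟨hp⟩
  have h1 : ∑ q ∈ s, F q = ∑ b ∈ s.image F, (s.filter (fun a => F a = b)).card • b :=
    Finset.sum_comp (fun b : ZMod p => b) F
  rw [h1]
  refine Finset.sum_eq_zero fun b _ => ?_
  have hmem : ∀ q, q ∈ s.filter (fun a => F a = b) ↔ σ q ∈ s.filter (fun a => F a = b) := by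
    intro q
    rw [Finset.mem_filter, Finset.mem_filter, hF, ← hs]
  let τ : Equiv.Perm {q // q ∈ s.filter (fun a => F a = b)} := σ.subtypePerm (fun q => (hmem q).symm)
  have hτ : τ ^ p ^ 1 = 1 := by
    rw [pow_one]
    ext q
    simp only [τ, Equiv.Perm.subtypePerm_pow, hσ]
    rfl
  have h2 := (Equiv.Perm.card_compl_support_modEq hτ).symm
  have h3 : τ.supportᶜ.card = 0 := by
    rw [Finset.card_eq_zero, Finset.eq_empty_iff_forall_notMem]
    intro q hq
    have : τ q = q := by simpa using hq
    exact hfix q.1 (Finset.mem_filter.1 q.2).1 (congrArg Subtype.val this)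
  rw [h3, Fintype.card_coe] at h2
  have h4 := (Nat.modEq_zero_iff_dvd.1 h2)
  have h5 : (((s.filter (fun a => F a = b)).card : ℕ) : ZMod p) = 0 :=
    (ZMod.natCast_eq_zero_iff _ _).2 h4
  rw [nsmul_eq_mul, h5, zero_mul]

variable {X : Type} [DecidableEq X]

theorem eq_one_of_twisted {ψ : MulAut (FreeGroup X)} {p : ℕ} (hp : p.Prime)
    (hψ : ψ ^ p = 1) {i : ℕ} {g h : FreeGroup X} (hh : ψ h = h) (hg : h * g = (ψ ^ i) g) :
    h = 1 := by
  have h1 : ∀ k : ℕ, ((ψ ^ i) ^ k) g = h ^ k * g := by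
    intro k
    induction k with
    | zero => simp
    | succ k ih =>
      rw [pow_succ', MulAut.mul_apply, ih, map_mul, map_pow, pow_fix ψ hh i, ← hg, pow_succ,
        mul_assoc]
  have h2 := h1 p
  rw [← pow_mul, mul_comm, pow_mul, hψ, one_pow, MulAut.one_apply] at h2
  have h3 : h ^ p = 1 := by simpa using h2.symm
  exact pow_inj_free hp.ne_zero (by simpa using h3)

/-- `a` and `b` are in the same "component of the complement" of a neighbourhood of `H`. -/
def Rel (ψ : MulAut (FreeGroup X)) (p R : ℕ) (a b : FreeGroup X) : Prop :=
  a = b ∨ ∀ (i : ℕ) (t), Btw ((ψ ^ i) a) t ((ψ ^ i) b) →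
    ∀ h1, ψ h1 = h1 → R < LN ψ p (h1⁻¹ * t)

theorem Rel.symm {ψ : MulAut (FreeGroup X)} {p R : ℕ} {a b : FreeGroup X}
    (h : Rel ψ p R a b) : Rel ψ p R b a := by
  rcases h with h | h
  · exact Or.inl h.symm
  · exact Or.inr fun i t ht => h i t ht.symm

theorem Rel.trans {ψ : MulAut (FreeGroup X)} {p R : ℕ} {a b c : FreeGroup X}
    (h : Rel ψ p R a b) (h' : Rel ψ p R b c) : Rel ψ p R a c := by
  rcases h with rfl | h
  · exact h'
  · rcases h' with rfl | h'
    · exact Or.inr h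
    · refine Or.inr fun i t ht => ?_
      rcases ht.split ((ψ ^ i) b) with h1 | h1
      · exact h i t h1
      · exact h' i t h1

theorem Rel.left_mul {ψ : MulAut (FreeGroup X)} {p R : ℕ} {a b : FreeGroup X}
    (h : Rel ψ p R a b) {g : FreeGroup X} (hg : ψ g = g) : Rel ψ p R (g * a) (g * b) := by
  rcases h with rfl | h
  · exact Or.inl rfl
  · refine Or.inr fun i t ht h1 hh1 => ?_
    rw [map_mul, map_mul, pow_fix ψ hg i] at ht
    have h2 : Btw ((ψ ^ i) a) (g⁻¹ * t) ((ψ ^ i) b) := by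
      apply Btw.of_left_mul g
      simpa using ht
    have := h i _ h2 (g⁻¹ * h1) (by simp [hg, hh1])
    simpa [mul_assoc] using this

theorem Rel.pow {ψ : MulAut (FreeGroup X)} {p R : ℕ} {a b : FreeGroup X}
    (h : Rel ψ p R a b) (j : ℕ) : Rel ψ p R ((ψ ^ j) a) ((ψ ^ j) b) := by
  rcases h with rfl | h
  · exact Or.inl rfl
  · refine Or.inr fun i t ht => ?_
    rw [← MulAut.mul_apply, ← MulAut.mul_apply, ← pow_add] at ht
    exact h (i + j) t ht

theorem pow_mul_pred {G : Type} [Group G] {ψ : G} {p : ℕ} (hp : p.Prime) (hψ : ψ ^ p = 1) (i : ℕ) :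
    ψ ^ (i * (p - 1)) * ψ ^ i = 1 := by
  have : i * (p - 1) + i = p * i := by
    obtain ⟨q, rfl⟩ : ∃ q, p = q + 1 := ⟨p - 1, (Nat.succ_pred_prime hp).symm⟩
    simp; ring
  rw [← pow_add, this, pow_mul, hψ, one_pow]

theorem rel_stab {ψ : MulAut (FreeGroup X)} {p R : ℕ} (hp : p.Prime) (hψ : ψ ^ p = 1)
    (hR : ∀ (i : ℕ) (g h : FreeGroup X), ψ h = h →
      (∀ t, Btw (h * g) t ((ψ ^ i) g) → ∀ h1, ψ h1 = h1 → R < LN ψ p (h1⁻¹ * t)) → h = 1)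
    {i i' : ℕ} {h h' r : FreeGroup X} (hh : ψ h = h) (hh' : ψ h' = h')
    (H : Rel ψ p R (h * (ψ ^ i) r) (h' * (ψ ^ i') r)) : h = h' := by
  have base : ∀ (j : ℕ) (g k : FreeGroup X), ψ k = k → Rel ψ p R (k * g) ((ψ ^ j) g) → k = 1 := by
    intro j g k hk hrel
    rcases hrel with he | hrel
    · exact eq_one_of_twisted hp hψ hk he
    · refine hR j g k hk fun t ht => hrel 0 t (by simpa using ht)
  have h1 := (H.left_mul (g := h⁻¹) (by simp [hh])).pow (i' * (p - 1))
  rw [inv_mul_cancel_left, ← mul_assoc, map_mul, ← MulAut.mul_apply, ← MulAut.mul_apply,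
    pow_mul_pred hp hψ, MulAut.one_apply, ← pow_add,
    pow_fix ψ (h := h⁻¹ * h') (by simp [hh, hh'])] at h1
  have h2 := base _ _ _ (by simp [hh, hh']) h1.symm
  rw [inv_mul_eq_one] at h2
  exact h2

/-- the "almost invariant" function -/
theorem exists_almost_invariant [Finite X] {ψ : MulAut (FreeGroup X)} {p : ℕ} (hp : p.Prime)
    (hψ : ψ ^ p = 1) (χ : FreeGroup X → ZMod p)
    (hχ : ∀ a b, ψ a = a → ψ b = b → χ (a * b) = χ a + χ b) :
    ∃ f : FreeGroup X → ZMod p, (∀ h g, ψ h = h → f (h * g) = χ h + f g) ∧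
      (∀ g, f (ψ g) = f g) ∧
      (∀ u, ∃ B : Set (FreeGroup X), B.Finite ∧
        ∀ g, f (g * u) ≠ f g → ∃ h b, ψ h = h ∧ b ∈ B ∧ g = h * b) := by
  obtain ⟨R, hR⟩ := exists_separation ψ hp hψ
  obtain ⟨L, hL⟩ := exists_LN_le ψ p
  have hrefl : ∀ a, Rel ψ p R a a := fun a => Or.inl rfl
  let S : Setoid (FreeGroup X) :=
    { r := fun a b => ∃ (h : FreeGroup X) (i : ℕ), ψ h = h ∧ Rel ψ p R b (h * (ψ ^ i) a)
      iseqv := by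
        refine ⟨fun a => ⟨1, 0, map_one _, by simpa using hrefl a⟩, ?_, ?_⟩
        · rintro a b ⟨h, i, hh, hrel⟩
          refine ⟨h⁻¹, i * (p - 1), by simp [hh], ?_⟩
          have h1 := ((hrel.pow (i * (p - 1))).left_mul (g := h⁻¹) (by simp [hh])).symm
          rw [map_mul, show (ψ ^ (i * (p - 1))) ((ψ ^ i) a) = (ψ ^ (i * (p - 1)) * ψ ^ i) a from rfl, pow_mul_pred hp hψ, MulAut.one_apply,
            pow_fix ψ hh, inv_mul_cancel_left] at h1
          exact h1
        · rintro a b c ⟨h, i, hh, hrel⟩ ⟨h', i', hh', hrel'⟩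
          refine ⟨h' * h, i' + i, by simp [hh, hh'], ?_⟩
          have h1 := (hrel.pow i').left_mul hh'
          rw [map_mul, ← MulAut.mul_apply, ← pow_add, pow_fix ψ hh, ← mul_assoc] at h1
          exact hrel'.trans h1 }
  let rep : FreeGroup X → FreeGroup X := fun g => (Quotient.mk S g).out
  have hrep : ∀ g, ∃ (h : FreeGroup X) (i : ℕ), ψ h = h ∧ Rel ψ p R g (h * (ψ ^ i) (rep g)) := by
    intro g
    exact (Quotient.mk_out (s := S) g)
  have hrep_eq : ∀ g g', (∃ (h : FreeGroup X) (i : ℕ), ψ h = h ∧ Rel ψ p R g' (h * (ψ ^ i) g)) →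
      rep g' = rep g := by
    intro g g' h
    have : Quotient.mk S g = Quotient.mk S g' := Quotient.sound h
    simp only [rep, this]
  choose kh ki hkh hkrel using hrep
  have hwd : ∀ g h i, ψ h = h → Rel ψ p R g (h * (ψ ^ i) (rep g)) → kh g = h := by
    intro g h i hh hrel
    exact rel_stab hp hψ hR (hkh g) hh ((hkrel g).symm.trans hrel)
  have hfrel : ∀ g g', Rel ψ p R g g' → kh g = kh g' := by
    intro g g' hrel
    have e : rep g = rep g' := hrep_eq g' g ⟨1, 0, map_one _, by simpa using hrel⟩
    refine hwd g _ (ki g') (hkh g') ?_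
    rw [e]
    exact hrel.trans (hkrel g')
  refine ⟨fun g => χ (kh g), ?_, ?_, ?_⟩
  · intro h g hh
    have e : rep (h * g) = rep g := hrep_eq g (h * g) ⟨h, 0, hh, by simpa using hrefl (h * g)⟩
    have : kh (h * g) = h * kh g := by
      refine hwd _ _ (ki g) (by simp [hh, hkh g]) ?_
      rw [e, mul_assoc]
      exact (hkrel g).left_mul hh
    simp only [this]
    exact hχ _ _ hh (hkh g)
  · intro g
    have e : rep (ψ g) = rep g := hrep_eq g (ψ g) ⟨1, 1, map_one _, by simpa using hrefl (ψ g)⟩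
    have : kh (ψ g) = kh g := by
      refine hwd _ _ (1 + ki g) (hkh g) ?_
      rw [e]
      have := (hkrel g).pow 1
      rw [map_mul, ← MulAut.mul_apply, ← pow_add, pow_fix ψ (hkh g), pow_one] at this
      exact this
    simp only [this]
  · intro u
    refine ⟨{b | LN ψ p b ≤ R + L * LN ψ p u},
      (finite_norm_le _).subset fun u hu => (norm_le_LN ψ hp u).trans hu, ?_⟩
    intro g hne
    have hnr : ¬ Rel ψ p R (g * u) g := fun h => hne (congrArg χ (hfrel _ _ h))
    unfold Rel at hnr
    push Not at hnr
    obtain ⟨-, i, t, ht, h1, hh1, hle⟩ := hnr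
    refine ⟨h1, h1⁻¹ * g, hh1, ?_, by group⟩
    have a1 : (t⁻¹ * (ψ ^ i) g).norm ≤ LN ψ p u := by
      have b1 : (((ψ ^ i) (g * u))⁻¹ * (ψ ^ i) g).norm = ((ψ ^ i) u).norm := by
        rw [← FreeGroup.norm_inv_eq]; simp
      have b2 := norm_le_LN ψ hp ((ψ ^ i) u)
      rw [LN_psi_pow ψ hψ] at b2
      unfold Btw at ht
      omega
    have a2 := hL (t⁻¹ * (ψ ^ i) g)
    have a3 : L * (t⁻¹ * (ψ ^ i) g).norm ≤ L * LN ψ p u := Nat.mul_le_mul_left _ a1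
    have a4 := LN_tri ψ p h1 t ((ψ ^ i) g)
    have a5 := LN_psi_pow ψ hψ i (h1⁻¹ * g)
    rw [map_mul, map_inv, pow_fix ψ hh1] at a5
    simp only [Set.mem_setOf_eq]
    omega

theorem exists_extension [Finite X] {ψ : MulAut (FreeGroup X)} {p : ℕ} (hp : p.Prime)
    (hψ : ψ ^ p = 1) (χ : FreeGroup X → ZMod p)
    (hχ : ∀ a b, ψ a = a → ψ b = b → χ (a * b) = χ a + χ b) :
    ∃ α : FreeGroup X → ZMod p, (∀ a b, α (a * b) = α a + α b) ∧ ∀ h, ψ h = h → α h = χ h := by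
  obtain ⟨f, hf1, hf2, hf3⟩ := exists_almost_invariant hp hψ χ hχ
  let S : Setoid (FreeGroup X) :=
    { r := fun a b => ∃ h : FreeGroup X, ψ h = h ∧ b = h * a
      iseqv := by
        refine ⟨fun a => ⟨1, map_one _, by simp⟩, ?_, ?_⟩
        · rintro a b ⟨h, hh, rfl⟩
          exact ⟨h⁻¹, by simp [hh], by simp⟩
        · rintro a b c ⟨h, hh, rfl⟩ ⟨h', hh', rfl⟩
          exact ⟨h' * h, by simp [hh, hh'], by simp [mul_assoc]⟩ }
  let Q := Quotient S
  let δ : FreeGroup X → Q → ZMod p := fun u => Quotient.lift (fun g => f (g * u) - f g) (by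
    rintro a b ⟨h, hh, rfl⟩
    simp only [mul_assoc, hf1 h _ hh]
    ring)
  let sh : FreeGroup X → Q → Q := fun u => Quotient.map (fun g => g * u) (by
    rintro a b ⟨h, hh, rfl⟩
    exact ⟨h, hh, by simp [mul_assoc]⟩)
  let she : FreeGroup X → Q ≃ Q := fun u =>
    { toFun := sh u
      invFun := sh u⁻¹
      left_inv := by rintro ⟨g⟩; exact congrArg (Quotient.mk S) (mul_inv_cancel_right g u)
      right_inv := by rintro ⟨g⟩; exact congrArg (Quotient.mk S) (inv_mul_cancel_right g u) }
  have hψi : ∀ h, ψ h = h → ψ.symm h = h := by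
    intro h hh
    rw [MulEquiv.symm_apply_eq, hh]
  let σ : Equiv.Perm Q :=
    { toFun := Quotient.map (fun g => ψ g) (by
        rintro a b ⟨h, hh, rfl⟩
        exact ⟨h, hh, by simp [hh]⟩)
      invFun := Quotient.map (fun g => ψ.symm g) (by
        rintro a b ⟨h, hh, rfl⟩
        exact ⟨h, hh, by simp [hψi h hh]⟩)
      left_inv := by rintro ⟨g⟩; exact congrArg (Quotient.mk S) (ψ.symm_apply_apply g)
      right_inv := by rintro ⟨g⟩; exact congrArg (Quotient.mk S) (ψ.apply_symm_apply g) }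
  have hσk : ∀ k g, (σ ^ k) (Quotient.mk S g) = Quotient.mk S ((ψ ^ k) g) := by
    intro k g
    induction k with
    | zero => simp
    | succ k ih =>
      rw [pow_succ', Equiv.Perm.mul_apply, ih, pow_succ', MulAut.mul_apply]
      rfl
  have hσ : σ ^ p = 1 := by
    ext ⟨g⟩
    have := hσk p g
    rw [hψ] at this
    exact this
  have hfin : ∀ u, (Function.support (δ u)).Finite := by
    intro u
    obtain ⟨B, hB, hB'⟩ := hf3 u
    refine (hB.image (Quotient.mk S)).subset ?_
    rintro ⟨g⟩ hg
    have hg' : f (g * u) ≠ f g := fun h => hg (by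
      change f (g * u) - f g = 0
      rw [h, sub_self])
    obtain ⟨h, b, hh, hb, rfl⟩ := hB' g hg'
    exact ⟨b, hb, Quotient.sound ⟨h, hh, rfl⟩⟩
  refine ⟨fun u => ∑ᶠ q, δ u q, ?_, ?_⟩
  · intro a b
    have h1 : ∀ q, δ (a * b) q = δ a q + δ b (she a q) := by
      rintro ⟨g⟩
      change f (g * (a * b)) - f g = f (g * a) - f g + (f (g * a * b) - f (g * a))
      rw [mul_assoc]; ring
    have h2 : ∑ᶠ q, δ b (she a q) = ∑ᶠ q, δ b q := finsum_comp_equiv (she a)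
    simp only [h1]
    rw [finsum_add_distrib (hfin a), h2]
    exact (hfin b).preimage (she a).injective.injOn
  · intro h hh
    have hinv : ∀ q, δ h (σ q) = δ h q := by
      rintro ⟨g⟩
      change f (ψ g * h) - f (ψ g) = f (g * h) - f g
      rw [hf2]
      nth_rewrite 1 [← hh]
      rw [← map_mul, hf2]
    let q0 : Q := Quotient.mk S 1
    have hfixq : ∀ q, σ q = q → q = q0 := by
      rintro ⟨g⟩ hq
      have h1 : Quotient.mk S g = Quotient.mk S (ψ g) := hq.symm
      obtain ⟨k, hk, hkg⟩ := Quotient.exact h1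
      have : k = 1 := eq_one_of_twisted (i := 1) (g := g) hp hψ hk (by rw [pow_one, hkg])
      subst this
      have hg : ψ g = g := by simpa using hkg
      refine (Quotient.sound ?_ : Quotient.mk S g = Quotient.mk S 1)
      exact ⟨g⁻¹, by simp [hg], by simp⟩
    have hσ0 : σ q0 = q0 := by
      change Quotient.mk S (ψ 1) = Quotient.mk S 1
      rw [map_one]
    classical
    have h1 : ∑ᶠ q, δ h q = ∑ q ∈ insert q0 (hfin h).toFinset, δ h q := by
      apply finsum_eq_sum_of_support_subset
      intro q hq
      simp only [Finset.coe_insert, Set.Finite.coe_toFinset]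
      exact Or.inr hq
    have h2 : ∑ q ∈ (insert q0 (hfin h).toFinset).erase q0, δ h q = 0 := by
      refine sum_invariant hp σ hσ _ _ ?_ hinv ?_
      · intro q
        have e1 : σ q ≠ q0 ↔ q ≠ q0 := by
          rw [not_iff_not]
          constructor
          · intro e; apply σ.injective; rw [e, hσ0]
          · intro e; rw [e, hσ0]
        simp only [Finset.mem_erase, Finset.mem_insert, Set.Finite.mem_toFinset,
          Function.mem_support, hinv]
        constructor
        · rintro ⟨a, b⟩; exact ⟨e1.2 a, Or.inr (b.resolve_left a)⟩
        · rintro ⟨a, b⟩; exact ⟨e1.1 a, Or.inr (b.resolve_left a)⟩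
      · intro q hq he
        exact (Finset.mem_erase.1 hq).1 (hfixq q he)
    have h3 := Finset.add_sum_erase (insert q0 (hfin h).toFinset) (δ h)
      (Finset.mem_insert_self q0 _)
    simp only
    rw [h1, ← h3, h2, add_zero]
    change f (1 * h) - f 1 = χ h
    have := hf1 h 1 hh
    rw [mul_one] at this
    rw [one_mul, this]; ring

end Extension

end FixRank

namespace FixRank

def HasBasisLE (G : Type) [Group G] (r : ℕ) : Prop :=
  ∃ s : ℕ, s ≤ r ∧ Nonempty (FreeGroup (Fin s) ≃* G)

theorem HasBasisLE.of_bound {ι G : Type} [Group G] (b : FreeGroupBasis ι G) {r : ℕ}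
    (h : ∀ (s : ℕ) (_ : Fin s ↪ ι), s ≤ r) : HasBasisLE G r := by
  have hfin : Finite ι := by
    by_contra hinf
    rw [not_finite_iff_infinite] at hinf
    have := h (r + 1) ⟨fun i => Infinite.natEmbedding ι i, fun i j hij => by
      exact Fin.ext ((Infinite.natEmbedding ι).injective hij)⟩
    omega
  obtain ⟨s, ⟨e⟩⟩ := Finite.exists_equiv_fin ι
  exact ⟨s, h s e.symm.toEmbedding, ⟨(FreeGroup.freeGroupCongr e.symm).trans b.repr.symm⟩⟩

theorem HasBasisLE.fixed_prime {X : Type} [Fintype X] [DecidableEq X] {ψ : MulAut (FreeGroup X)}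
    {p : ℕ} (hp : p.Prime) (hψ : ψ ^ p = 1) (H : Subgroup (FreeGroup X))
    (hH : ∀ g, g ∈ H ↔ ψ g = g) : HasBasisLE H (Fintype.card X) := by
  classical
  let b := IsFreeGroup.basis H
  refine HasBasisLE.of_bound b fun s e => ?_
  have : Fact p.Prime := ⟨hp⟩
  let F : (Fin s → ZMod p) → (H →* Multiplicative (ZMod p)) := fun c =>
    b.lift (fun i => Multiplicative.ofAdd (Function.extend e c 0 i))
  let χ : (Fin s → ZMod p) → FreeGroup X → ZMod p := fun c g =>
    if hg : g ∈ H then (F c ⟨g, hg⟩).toAdd else 0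
  have hχ : ∀ c a b, ψ a = a → ψ b = b → χ c (a * b) = χ c a + χ c b := by
    intro c x y hx hy
    have hx := (hH _).2 hx
    have hy := (hH _).2 hy
    simp only [χ, dif_pos hx, dif_pos hy, dif_pos (H.mul_mem hx hy)]
    rw [← toAdd_mul, ← map_mul]
    rfl
  choose α hα1 hα2 using fun c => exists_extension hp hψ (χ c) (hχ c)
  have hval : ∀ c j, α c (b (e j) : H) = c j := by
    intro c j
    rw [hα2 c _ ((hH _).1 (b (e j)).2)]
    simp only [χ, dif_pos (b (e j)).2, F]
    simp [e.injective.extend_apply]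
  have hinj : Function.Injective (fun (c : Fin s → ZMod p) (x : X) => α c (FreeGroup.of x)) := by
    intro c c' hcc
    let A : (Fin s → ZMod p) → (FreeGroup X →* Multiplicative (ZMod p)) := fun c =>
      MonoidHom.mk' (fun g => Multiplicative.ofAdd (α c g)) (fun a b => by rw [hα1, ofAdd_add])
    have : A c = A c' := by
      ext x
      exact congrFun hcc x
    funext j
    rw [← hval c j, ← hval c' j]
    exact DFunLike.congr_fun this _
  have := Fintype.card_le_of_injective _ hinj
  simp only [Fintype.card_fun, ZMod.card, Fintype.card_fin] at this
  exact (Nat.pow_le_pow_iff_right hp.one_lt).1 this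

theorem HasBasisLE.of_equiv {G G' : Type} [Group G] [Group G'] (e : G ≃* G') {r : ℕ}
    (h : HasBasisLE G r) : HasBasisLE G' r := by
  obtain ⟨s, hs, ⟨f⟩⟩ := h
  exact ⟨s, hs, ⟨f.trans e⟩⟩

theorem HasBasisLE.fixed_prime' {G : Type} [Group G] {r : ℕ} (hG : HasBasisLE G r)
    (ψ : MulAut G) {p : ℕ} (hp : p.Prime) (hψ : ψ ^ p = 1) (H : Subgroup G)
    (hH : ∀ g, g ∈ H ↔ ψ g = g) : HasBasisLE H r := by
  obtain ⟨s, hs, ⟨f⟩⟩ := hG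
  let ψ' : MulAut (FreeGroup (Fin s)) := MulAut.congr f.symm ψ
  have h1 : ψ' ^ p = 1 := by
    simp only [ψ', ← map_pow, hψ, map_one]
  have h2 : ∀ g, ψ' g = f.symm (ψ (f g)) := fun g => rfl
  obtain ⟨t, ht, ⟨e⟩⟩ := HasBasisLE.fixed_prime (ψ := ψ') hp h1 (H.comap f.toMonoidHom) (by
    intro g
    rw [h2, MulEquiv.symm_apply_eq]
    exact hH (f g))
  refine ⟨t, by simp at ht; omega, ⟨e.trans ?_⟩⟩
  exact (f.subgroupMap (H.comap f.toMonoidHom)).trans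
    (MulEquiv.subgroupCongr (Subgroup.map_comap_eq_self_of_surjective f.surjective H))

def fixS {G : Type} [Group G] (ψ : MulAut G) : Subgroup G where
  carrier := {g | ψ g = g}
  one_mem' := map_one ψ
  mul_mem' := by
    intro a b (ha : ψ a = a) (hb : ψ b = b)
    change ψ (a * b) = a * b
    rw [map_mul, ha, hb]
  inv_mem' := by
    intro a (ha : ψ a = a)
    change ψ a⁻¹ = a⁻¹
    rw [map_inv, ha]

theorem mem_fixS {G : Type} [Group G] {ψ : MulAut G} {g : G} : g ∈ fixS ψ ↔ ψ g = g := Iff.rfl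

theorem fixS_le_pow {G : Type} [Group G] (ψ : MulAut G) (k : ℕ) : fixS ψ ≤ fixS (ψ ^ k) := by
  intro g hg
  rw [mem_fixS] at hg ⊢
  induction k with
  | zero => simp
  | succ k ih => rw [pow_succ, MulAut.mul_apply, hg, ih]

theorem HasBasisLE.fix_of_pow_prime {G : Type} [Group G] {r : ℕ} (ψ : MulAut G) {p : ℕ}
    (hp : p.Prime) (h : HasBasisLE (fixS (ψ ^ p)) r) : HasBasisLE (fixS ψ) r := by
  have key : ∀ g, g ∈ fixS (ψ ^ p) ↔ ψ g ∈ fixS (ψ ^ p) := by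
    intro g
    rw [mem_fixS, mem_fixS, ← MulAut.mul_apply, ← pow_succ, pow_succ', MulAut.mul_apply]
    exact ψ.injective.eq_iff.symm
  let ψ' : MulAut (fixS (ψ ^ p)) :=
    { toFun := fun g => ⟨ψ g.1, (key _).1 g.2⟩
      invFun := fun g => ⟨ψ.symm g.1, (key _).2 (by simp)⟩
      left_inv := fun g => Subtype.ext (by simp)
      right_inv := fun g => Subtype.ext (by simp)
      map_mul' := fun a b => Subtype.ext (by simp) }
  have h1 : ∀ k (g : fixS (ψ ^ p)), ((ψ' ^ k) g : G) = (ψ ^ k) g.1 := by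
    intro k g
    induction k with
    | zero => simp
    | succ k ih => rw [pow_succ', pow_succ', MulAut.mul_apply, MulAut.mul_apply, ← ih]; rfl
  have h2 := HasBasisLE.fixed_prime' h ψ' hp (by
    ext g
    rw [h1]
    exact g.2) ((fixS ψ).subgroupOf (fixS (ψ ^ p))) (by
    intro g
    rw [Subgroup.mem_subgroupOf, mem_fixS, Subtype.ext_iff]
    exact Iff.rfl)
  exact h2.of_equiv (Subgroup.subgroupOfEquivOfLe (fixS_le_pow ψ p))

theorem HasBasisLE.fix_of_pow {G : Type} [Group G] {r : ℕ} (m : ℕ) (hm : m ≠ 0) (ψ : MulAut G)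
    (h : HasBasisLE (fixS (ψ ^ m)) r) : HasBasisLE (fixS ψ) r := by
  induction m using Nat.recOnMul generalizing ψ with
  | zero => exact absurd rfl hm
  | one => rwa [pow_one] at h
  | prime p hp => exact HasBasisLE.fix_of_pow_prime ψ hp h
  | mul a b iha ihb =>
    rw [pow_mul] at h
    exact iha (by rintro rfl; simp at hm) _ (ihb (by rintro rfl; simp at hm) _ h)

end FixRank

namespace FixRank

open scoped ENNReal InnerProductSpace

abbrev L2 (α : Type) : Type := lp (fun _ : α => ℝ) 2

open Classical in
noncomputable def eb {α : Type} (a : α) : L2 α := lp.single 2 a (1 : ℝ)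

theorem inner_eb_left {α : Type} (a : α) (f : L2 α) : ⟪eb a, f⟫_ℝ = f a := by
  classical
  unfold eb
  rw [lp.inner_single_left]
  simp

theorem inner_eb_right {α : Type} (a : α) (f : L2 α) : ⟪f, eb a⟫_ℝ = f a := by
  rw [real_inner_comm, inner_eb_left]

open Classical in
theorem eb_apply {α : Type} (a b : α) : (eb a : L2 α) b = if b = a then 1 else 0 := by
  unfold eb
  rw [lp.single_apply, Pi.single_apply]

theorem norm_sq_L2 {α : Type} (f : L2 α) : ‖f‖ ^ 2 = ∑' a, f a ^ 2 := by
  rw [← real_inner_self_eq_norm_sq, lp.inner_eq_tsum]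
  simp [pow_two]

theorem summable_L2 {α : Type} (f : L2 α) : Summable fun a => f a ^ 2 := by
  have := lp.summable_inner (𝕜 := ℝ) f f
  simpa [pow_two] using this

theorem memL2 {α : Type} {f : α → ℝ} (h : Summable fun a => f a ^ 2) : Memℓp f 2 := by
  refine memℓp_gen ?_
  simpa using h

theorem memL2_of_finite {α : Type} {f : α → ℝ} (h : {a | f a ≠ 0}.Finite) : Memℓp f 2 := by
  refine memL2 (summable_of_hasFiniteSupport (h.subset ?_))
  intro a ha
  simp at ha
  exact ha

noncomputable def compL {α β : Type} (e : α → β) (he : Function.Injective e) :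
    L2 β →L[ℝ] L2 α :=
  LinearMap.mkContinuous
    { toFun := fun f => ⟨fun a => f (e a), memL2 ((summable_L2 f).comp_injective he)⟩
      map_add' := fun f g => by ext a; rfl
      map_smul' := fun c f => by ext a; rfl } 1 (by
    intro f
    rw [one_mul]
    refine le_of_sq_le_sq ?_ (norm_nonneg _)
    rw [norm_sq_L2, norm_sq_L2]
    exact tsum_comp_le_tsum_of_inj (summable_L2 f) (fun a => sq_nonneg _) he)

theorem compL_apply {α β : Type} (e : α → β) (he : Function.Injective e) (f : L2 β) (a : α) :
    compL e he f a = f (e a) := rfl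

theorem inner_compL {α : Type} (e : α ≃ α) (f g : L2 α) :
    ⟪compL e e.injective f, g⟫_ℝ = ⟪f, compL e.symm e.symm.injective g⟫_ℝ := by
  rw [lp.inner_eq_tsum, lp.inner_eq_tsum, ← Equiv.tsum_eq e.symm]
  simp [compL_apply]

theorem ext_L2 {α : Type} {f g : L2 α} (h : ∀ a, f a = g a) : f = g := by
  ext a; exact h a

end FixRank

namespace FixRank

open scoped ENNReal InnerProductSpace
open ContinuousLinearMap

def shiftE (I : Type) {G : Type} [Group G] (u : G) : I × G ≃ I × G where
  toFun p := (p.1, p.2 * u)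
  invFun p := (p.1, p.2 * u⁻¹)
  left_inv p := by simp
  right_inv p := by simp

noncomputable def Rr (I : Type) {G : Type} [Group G] (u : G) : L2 (I × G) →L[ℝ] L2 (I × G) :=
  compL (shiftE I u) (shiftE I u).injective

theorem Rr_apply {I G : Type} [Group G] (u : G) (f : L2 (I × G)) (i : I) (y : G) :
    Rr I u f (i, y) = f (i, y * u) := rfl

theorem inner_Rr {I G : Type} [Group G] (u : G) (f g : L2 (I × G)) :
    ⟪Rr I u f, g⟫_ℝ = ⟪f, Rr I u⁻¹ g⟫_ℝ := inner_compL (shiftE I u) f g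

theorem Rr_eb {I G : Type} [Group G] (u : G) (i : I) (y : G) :
    Rr I u (eb (i, y)) = eb (i, y * u⁻¹) := by
  refine ext_L2 fun ⟨j, z⟩ => ?_
  rw [Rr_apply, eb_apply, eb_apply]
  have hh : (j, z * u) = (i, y) ↔ (j, z) = (i, y * u⁻¹) := by
    rw [Prod.mk.injEq, Prod.mk.injEq, eq_mul_inv_iff_mul_eq]
  by_cases h : (j, z * u) = (i, y)
  · rw [if_pos h, if_pos (hh.1 h)]
  · rw [if_neg h, if_neg (fun h' => h (hh.2 h'))]

def Equivar {I J G : Type} [Group G] (T : L2 (I × G) →L[ℝ] L2 (J × G)) : Prop :=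
  ∀ u f, T (Rr I u f) = Rr J u (T f)

theorem Equivar.adj {I J G : Type} [Group G] {T : L2 (I × G) →L[ℝ] L2 (J × G)}
    (h : Equivar T) : Equivar (adjoint T) := by
  intro u f
  refine ext_inner_right ℝ fun v => ?_
  rw [adjoint_inner_left, inner_Rr, ← h, inner_Rr, adjoint_inner_left]

noncomputable def trc {I G : Type} [Group G] [Fintype I]
    (B : L2 (I × G) →L[ℝ] L2 (I × G)) : ℝ := ∑ i, (B (eb (i, 1))) (i, 1)

theorem trc_comp {I J G : Type} [Group G] [Fintype I] [Fintype J]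
    {T : L2 (I × G) →L[ℝ] L2 (J × G)} {S : L2 (J × G) →L[ℝ] L2 (I × G)} (hT : Equivar T) :
    trc (T ∘L S) = ∑ j, ∑ i, ∑' g, S (eb (j, 1)) (i, g) * T (eb (i, 1)) (j, g⁻¹) := by
  unfold trc
  refine Finset.sum_congr rfl fun j _ => ?_
  have h0 : ∀ i g, (adjoint T (eb (j, 1))) (i, g) = T (eb (i, 1)) (j, g⁻¹) := by
    intro i g
    rw [← inner_eb_right, adjoint_inner_left, inner_eb_left]
    have : (eb (i, g) : L2 (I × G)) = Rr I g⁻¹ (eb (i, 1)) := by rw [Rr_eb]; simp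
    rw [this, hT, Rr_apply, one_mul]
  have h1 : ((T ∘L S) (eb (j, 1))) (j, 1) = ⟪S (eb (j, 1)), adjoint T (eb (j, 1))⟫_ℝ := by
    rw [adjoint_inner_right, inner_eb_right]; rfl
  rw [h1, lp.inner_eq_tsum]
  have h2 : ∀ p : I × G, ⟪S (eb (j, 1)) p, adjoint T (eb (j, 1)) p⟫_ℝ
      = S (eb (j, 1)) p * T (eb (p.1, 1)) (j, p.2⁻¹) := by
    rintro ⟨i, g⟩
    rw [h0]
    exact mul_comm _ _
  have h3 := lp.summable_inner (𝕜 := ℝ) (S (eb (j, 1))) (adjoint T (eb (j, 1)))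
  rw [summable_congr h2] at h3
  rw [tsum_congr h2, h3.tsum_prod, tsum_fintype]

theorem trc_comm {I J G : Type} [Group G] [Fintype I] [Fintype J]
    {T : L2 (I × G) →L[ℝ] L2 (J × G)} {S : L2 (J × G) →L[ℝ] L2 (I × G)} (hT : Equivar T)
    (hS : Equivar S) : trc (T ∘L S) = trc (S ∘L T) := by
  rw [trc_comp hT, trc_comp hS, Finset.sum_comm]
  refine Finset.sum_congr rfl fun i _ => Finset.sum_congr rfl fun j _ => ?_
  rw [← Equiv.tsum_eq (Equiv.inv G)]
  refine tsum_congr fun g => ?_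
  simp [mul_comm]

theorem trc_one_sub {I G : Type} [Group G] [Fintype I] (B : L2 (I × G) →L[ℝ] L2 (I × G)) :
    trc (1 - B) = Fintype.card I - trc B := by
  unfold trc
  have : ∀ i : I, ((1 - B) (eb (i, (1 : G)))) (i, 1) = 1 - (B (eb (i, 1))) (i, 1) := by
    intro i
    have h : (eb (i, (1 : G)) : L2 (I × G)) (i, 1) = 1 := by rw [eb_apply]; simp
    rw [← h]
    rfl
  simp only [this]
  rw [Finset.sum_sub_distrib]
  simp

section hilb

variable {E F : Type} [NormedAddCommGroup E] [InnerProductSpace ℝ E] [CompleteSpace E]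
  [NormedAddCommGroup F] [InnerProductSpace ℝ F] [CompleteSpace F]

theorem contr (T : E →L[ℝ] F) {c : ℝ} (hc : 0 < c) (hcT : c * ‖T‖ ^ 2 ≤ 1) (z : F) :
    ‖z - c • T (adjoint T z)‖ ^ 2 ≤ ‖z‖ ^ 2 - c * ‖adjoint T z‖ ^ 2 := by
  have h1 : ‖T (adjoint T z)‖ ^ 2 ≤ ‖T‖ ^ 2 * ‖adjoint T z‖ ^ 2 := by
    rw [← mul_pow]
    exact pow_le_pow_left₀ (norm_nonneg _) (T.le_opNorm _) 2
  rw [norm_sub_sq_real, inner_smul_right, ← adjoint_inner_left, real_inner_self_eq_norm_sq,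
    norm_smul, mul_pow, Real.norm_eq_abs, sq_abs]
  have h2 : 0 ≤ ‖adjoint T z‖ ^ 2 := sq_nonneg _
  have h3 : c ^ 2 * ‖T (adjoint T z)‖ ^ 2 ≤ c * ‖adjoint T z‖ ^ 2 := by
    calc c ^ 2 * ‖T (adjoint T z)‖ ^ 2 ≤ c ^ 2 * (‖T‖ ^ 2 * ‖adjoint T z‖ ^ 2) := by gcongr
      _ = c * (c * ‖T‖ ^ 2) * ‖adjoint T z‖ ^ 2 := by ring
      _ ≤ c * 1 * ‖adjoint T z‖ ^ 2 := by gcongr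
      _ = _ := by ring
  linarith

theorem iterate_eq_pow (D : F →L[ℝ] F) (k : ℕ) (z : F) : (D : F → F)^[k] z = (D ^ k) z := by
  induction k with
  | zero => rfl
  | succ k ih => rw [Function.iterate_succ_apply', ih, pow_succ']; rfl

theorem ergodic (T : E →L[ℝ] F) (hT : ∀ z, adjoint T z = 0 → z = 0) {c : ℝ} (hc : 0 < c)
    (hcT : c * ‖T‖ ^ 2 ≤ 1) (z : F) :
    Filter.Tendsto (fun N : ℕ => (N : ℝ)⁻¹ • ∑ k ∈ Finset.range N,
      ((1 - c • (T ∘L adjoint T)) ^ (2 * k)) z) Filter.atTop (nhds 0) := by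
  set C : F →L[ℝ] F := 1 - c • (T ∘L adjoint T) with hC
  have hCz : ∀ z, C z = z - c • T (adjoint T z) := fun z => rfl
  have hC1 : ∀ z, ‖C z‖ ≤ ‖z‖ := by
    intro z
    refine le_of_sq_le_sq ?_ (norm_nonneg _)
    have := contr T hc hcT z
    rw [hCz]
    have h2 : 0 ≤ c * ‖adjoint T z‖ ^ 2 := by positivity
    linarith
  have hn : ‖C ^ 2‖ ≤ 1 := by
    refine opNorm_le_bound _ zero_le_one fun z => ?_
    rw [one_mul, pow_two]
    exact (hC1 _).trans (hC1 _)
  have h := ContinuousLinearMap.tendsto_birkhoffAverage_orthogonalProjection (C ^ 2) hn z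
  have hbot : ∀ w, w ∈ ((C ^ 2).eqLocus (1 : F →L[ℝ] F)) → w = 0 := by
    intro w hw
    have hw' : C (C w) = w := by
      rw [pow_two] at hw
      exact hw
    apply hT
    have h1 := contr T hc hcT w
    rw [← hCz] at h1
    have h2 : ‖w‖ ≤ ‖C w‖ := by
      conv_lhs => rw [← hw']
      exact hC1 _
    have h3 : ‖w‖ ^ 2 ≤ ‖C w‖ ^ 2 := by gcongr
    have h4 : ‖adjoint T w‖ ^ 2 ≤ 0 := by
      by_contra h5
      push Not at h5
      have := mul_pos hc h5
      linarith
    have h5 : ‖adjoint T w‖ ^ 2 = 0 := le_antisymm h4 (sq_nonneg _)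
    simpa using h5
  have h0 : (((C ^ 2).eqLocus (1 : F →L[ℝ] F)).orthogonalProjectionOnto z : F) = 0 :=
    hbot _ (Subtype.coe_prop _)
  rw [h0] at h
  refine h.congr fun N => ?_
  simp only [birkhoffAverage, birkhoffSum, id]
  congr 1
  refine Finset.sum_congr rfl fun k _ => ?_
  rw [pow_mul]
  exact iterate_eq_pow _ _ _

end hilb

theorem Equivar.add {I J G : Type} [Group G] {T S : L2 (I × G) →L[ℝ] L2 (J × G)}
    (h : Equivar T) (h' : Equivar S) : Equivar (T + S) := by
  intro u f
  rw [add_apply, add_apply, h, h', map_add]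

theorem Equivar.smul {I J G : Type} [Group G] {T : L2 (I × G) →L[ℝ] L2 (J × G)}
    (h : Equivar T) (c : ℝ) : Equivar (c • T) := by
  intro u f
  rw [smul_apply, smul_apply, h, map_smul]

theorem Equivar.comp {I J K G : Type} [Group G] {T : L2 (J × G) →L[ℝ] L2 (K × G)}
    {S : L2 (I × G) →L[ℝ] L2 (J × G)} (h : Equivar T) (h' : Equivar S) : Equivar (T ∘L S) := by
  intro u f
  rw [comp_apply, comp_apply, h', h]

theorem exists_S {I J G : Type} [Group G] {T : L2 (I × G) →L[ℝ] L2 (J × G)} (hT : Equivar T)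
    (c : ℝ) (N : ℕ) : ∃ S : L2 (J × G) →L[ℝ] L2 (I × G), Equivar S ∧
      (1 - c • (T ∘L adjoint T)) ^ N = 1 - T ∘L S ∧
      (1 - c • (adjoint T ∘L T)) ^ N = 1 - S ∘L T := by
  induction N with
  | zero => exact ⟨0, fun u f => by simp, by simp, by simp⟩
  | succ N ih =>
    obtain ⟨S, hS, h1, h2⟩ := ih
    refine ⟨S + c • (adjoint T) + (-c) • (adjoint T ∘L (T ∘L S)),
      (hS.add (hT.adj.smul c)).add ((hT.adj.comp (hT.comp hS)).smul _), ?_, ?_⟩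
    · rw [pow_succ', h1]
      ext1 v
      simp only [mul_apply_eq_comp, sub_apply, one_apply_eq_self, smul_apply, comp_apply, add_apply, map_sub,
        map_add, map_smul]
      module
    · rw [pow_succ', h2]
      ext1 v
      simp only [mul_apply_eq_comp, sub_apply, one_apply_eq_self, smul_apply, comp_apply, add_apply, map_sub,
        map_add, map_smul]
      module

theorem trc_even {I J G : Type} [Group G] [Fintype I] (T : L2 (I × G) →L[ℝ] L2 (J × G))
    (c : ℝ) (k : ℕ) : 0 ≤ trc ((1 - c • (adjoint T ∘L T)) ^ (2 * k)) := by
  set C := (1 - c • (adjoint T ∘L T)) with hC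
  have hsa : ∀ v w, ⟪C v, w⟫_ℝ = ⟪v, C w⟫_ℝ := by
    intro v w
    simp only [hC, sub_apply, one_apply_eq_self, smul_apply, comp_apply, inner_sub_left, inner_sub_right,
      inner_smul_left, inner_smul_right, adjoint_inner_left, adjoint_inner_right]
    rfl
  have hsk : ∀ k v w, ⟪(C ^ k) v, w⟫_ℝ = ⟪v, (C ^ k) w⟫_ℝ := by
    intro k
    induction k with
    | zero => intro v w; rfl
    | succ k ih =>
      intro v w
      rw [pow_succ]
      nth_rewrite 2 [← pow_succ]
      rw [pow_succ']
      exact (ih _ _).trans (hsa _ _)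
  refine Finset.sum_nonneg fun i _ => ?_
  rw [← inner_eb_right, two_mul, pow_add]
  have : ⟪(C ^ k * C ^ k) (eb (i, (1 : G))), eb (i, 1)⟫_ℝ =
      ⟪(C ^ k) (eb (i, (1 : G))), (C ^ k) (eb (i, 1))⟫_ℝ := hsk k _ _
  rw [this]
  exact real_inner_self_nonneg

theorem dim_le {I J G : Type} [Group G] [Fintype I] [Fintype J]
    {T : L2 (I × G) →L[ℝ] L2 (J × G)} (hT : Equivar T) (h0 : ∀ z, adjoint T z = 0 → z = 0) :
    Fintype.card J ≤ Fintype.card I := by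
  set c : ℝ := (1 + ‖T‖ ^ 2)⁻¹ with hc
  have hpos : 0 < 1 + ‖T‖ ^ 2 := by positivity
  have hc0 : 0 < c := inv_pos.2 hpos
  have hc1 : c * ‖T‖ ^ 2 ≤ 1 := by
    rw [hc, inv_mul_le_iff₀ hpos]
    linarith
  have hk : ∀ k : ℕ, (Fintype.card J : ℝ) - Fintype.card I ≤
      trc ((1 - c • (T ∘L adjoint T)) ^ (2 * k)) := by
    intro k
    obtain ⟨S, hS, h1, h2⟩ := exists_S hT c (2 * k)
    have h3 := trc_even T c k
    rw [h2, trc_one_sub] at h3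
    rw [h1, trc_one_sub, trc_comm hT hS]
    linarith
  have hlim : Filter.Tendsto (fun N : ℕ => ∑ j : J, ⟪(N : ℝ)⁻¹ • ∑ k ∈ Finset.range N,
      ((1 - c • (T ∘L adjoint T)) ^ (2 * k)) (eb (j, (1 : G))), eb (j, 1)⟫_ℝ) Filter.atTop
      (nhds (∑ j : J, ⟪(0 : L2 (J × G)), eb (j, (1 : G))⟫_ℝ)) := by
    refine tendsto_finsetSum _ fun j _ => ?_
    exact (ergodic T h0 hc0 hc1 (eb (j, 1))).inner tendsto_const_nhds
  simp only [inner_zero_left, Finset.sum_const_zero] at hlim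
  have hge : ∀ᶠ N : ℕ in Filter.atTop, (Fintype.card J : ℝ) - Fintype.card I ≤
      ∑ j : J, ⟪(N : ℝ)⁻¹ • ∑ k ∈ Finset.range N,
      ((1 - c • (T ∘L adjoint T)) ^ (2 * k)) (eb (j, (1 : G))), eb (j, 1)⟫_ℝ := by
    filter_upwards [Filter.eventually_gt_atTop 0] with N hN
    have hN' : (0 : ℝ) < N := by exact_mod_cast hN
    have e1 : ∑ j : J, ⟪(N : ℝ)⁻¹ • ∑ k ∈ Finset.range N,
      ((1 - c • (T ∘L adjoint T)) ^ (2 * k)) (eb (j, (1 : G))), eb (j, 1)⟫_ℝ =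
      (N : ℝ)⁻¹ * ∑ k ∈ Finset.range N, trc ((1 - c • (T ∘L adjoint T)) ^ (2 * k)) := by
      unfold trc
      rw [Finset.sum_comm, Finset.mul_sum]
      refine Finset.sum_congr rfl fun j _ => ?_
      rw [real_inner_smul_left, sum_inner]
      congr 1
      refine Finset.sum_congr rfl fun k _ => ?_
      rw [inner_eb_right]
    rw [e1, le_inv_mul_iff₀ hN']
    calc (N : ℝ) * ((Fintype.card J : ℝ) - Fintype.card I)
        = ∑ k ∈ Finset.range N, ((Fintype.card J : ℝ) - Fintype.card I) := by
          rw [Finset.sum_const, Finset.card_range, nsmul_eq_mul]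
      _ ≤ _ := Finset.sum_le_sum fun k _ => hk k
  have := ge_of_tendsto hlim hge
  have h : (Fintype.card J : ℝ) ≤ Fintype.card I := by linarith
  exact_mod_cast h

end FixRank

namespace FixRank

open scoped ENNReal InnerProductSpace
open ContinuousLinearMap

theorem exists_deriv {ι G A : Type} [Group G] [AddCommGroup A] (b : FreeGroupBasis ι G)
    (ρ : G →* AddMonoid.End A) (d : ι → A) :
    ∃ D : G → A, (∀ i, D (b i) = d i) ∧ ∀ g h, D (g * h) = D g + ρ g (D h) := by
  let act : G →* MulAut (Multiplicative A) :=
    { toFun := fun g => AddEquiv.toMultiplicative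
        { toFun := ρ g
          invFun := ρ g⁻¹
          left_inv := fun a => by
            change (ρ g⁻¹ * ρ g) a = a
            rw [← map_mul, inv_mul_cancel, map_one]; rfl
          right_inv := fun a => by
            change (ρ g * ρ g⁻¹) a = a
            rw [← map_mul, mul_inv_cancel, map_one]; rfl
          map_add' := fun a a' => map_add _ _ _ }
      map_one' := by
        ext a
        change Multiplicative.ofAdd (ρ 1 a.toAdd) = a
        rw [map_one]; rfl
      map_mul' := fun g h => by
        ext a
        change Multiplicative.ofAdd (ρ (g * h) a.toAdd) = Multiplicative.ofAdd (ρ g (ρ h a.toAdd))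
        rw [map_mul]; rfl }
  let L : G →* Multiplicative A ⋊[act] G := b.lift (fun i => ⟨Multiplicative.ofAdd (d i), b i⟩)
  have hL : SemidirectProduct.rightHom.comp L = MonoidHom.id G := by
    refine b.ext_hom _ _ fun i => ?_
    simp [L]
  have hL' : ∀ g, (L g).right = g := fun g => DFunLike.congr_fun hL g
  refine ⟨fun g => (L g).left.toAdd, fun i => by simp [L], fun g h => ?_⟩
  simp only
  rw [map_mul, SemidirectProduct.mul_left, hL']
  rfl

section

variable {X : Type}

def IsDer (d : FreeGroup X → FreeGroup X → ℝ) : Prop :=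
  ∀ g h y, d (g * h) y = d g y + d h (g⁻¹ * y)

theorem IsDer.one {d : FreeGroup X → FreeGroup X → ℝ} (h : IsDer d) (y : FreeGroup X) :
    d 1 y = 0 := by
  have := h 1 1 y
  rw [mul_one, inv_one, one_mul] at this
  linarith

theorem IsDer.inv {d : FreeGroup X → FreeGroup X → ℝ} (h : IsDer d) (g y : FreeGroup X) :
    d g⁻¹ y = - d g (g * y) := by
  have := h g⁻¹ g y
  rw [inv_mul_cancel, h.one, inv_inv] at this
  linarith

theorem IsDer.sub {d d' : FreeGroup X → FreeGroup X → ℝ} (h : IsDer d) (h' : IsDer d') :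
    IsDer (fun g y => d g y - d' g y) := by
  intro g k y
  simp only [h g k y, h' g k y]
  ring

theorem der_local (g : FreeGroup X) : ∃ C : Set (FreeGroup X), C.Finite ∧
    ∀ d : FreeGroup X → FreeGroup X → ℝ, IsDer d → ∀ y,
      (∀ x, ∀ c ∈ C, d (FreeGroup.of x) (c * y) = 0) → d g y = 0 := by
  induction g using FreeGroup.induction_on with
  | C1 => exact ⟨∅, Set.finite_empty, fun d hd y _ => hd.one y⟩
  | of x => exact ⟨{1}, Set.finite_singleton _, fun d hd y h => by simpa using h x 1 rfl⟩
  | inv_of x _ =>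
    refine ⟨{FreeGroup.of x}, Set.finite_singleton _, fun d hd y h => ?_⟩
    have := h x _ rfl
    rw [hd.inv, this, neg_zero]
  | mul a b iha ihb =>
    obtain ⟨C, hC, h1⟩ := iha
    obtain ⟨C', hC', h2⟩ := ihb
    refine ⟨C ∪ (fun c => c * a⁻¹) '' C', hC.union (hC'.image _), fun d hd y h => ?_⟩
    rw [hd, h1 d hd y (fun x c hc => h x c (Or.inl hc)), h2 d hd _ (fun x c hc => ?_), add_zero]
    rw [← mul_assoc]
    exact h x _ (Or.inr ⟨c, hc, rfl⟩)

theorem der_ext {d d' : FreeGroup X → FreeGroup X → ℝ} (h : IsDer d) (h' : IsDer d')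
    (hx : ∀ x y, d (FreeGroup.of x) y = d' (FreeGroup.of x) y) (g y : FreeGroup X) :
    d g y = d' g y := by
  obtain ⟨C, _, hC⟩ := der_local g
  have := hC _ (h.sub h') y (fun x c _ => by simp [hx])
  linarith

noncomputable def lam (g : FreeGroup X) : L2 (FreeGroup X) →L[ℝ] L2 (FreeGroup X) :=
  compL (fun y => g⁻¹ * y) (mul_right_injective _)

theorem lam_apply (g y : FreeGroup X) (f : L2 (FreeGroup X)) : lam g f y = f (g⁻¹ * y) := rfl

noncomputable def Pr {I : Type} {G : Type} (i : I) : L2 (I × G) →L[ℝ] L2 G :=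
  compL (fun y => (i, y)) (Prod.mk_right_injective i)

theorem Pr_apply {I : Type} {G : Type} (i : I) (f : L2 (I × G)) (y : G) :
    Pr i f y = f (i, y) := rfl

theorem exists_Dop (X : Type) : ∃ D : FreeGroup X → (L2 (X × FreeGroup X) →L[ℝ] L2 (FreeGroup X)),
    (∀ x, D (FreeGroup.of x) = Pr x) ∧ ∀ g h, D (g * h) = D g + lam g ∘L D h := by
  let ρ : FreeGroup X →* AddMonoid.End (L2 (X × FreeGroup X) →L[ℝ] L2 (FreeGroup X)) :=
    { toFun := fun g =>
        { toFun := fun B => lam g ∘L B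
          map_zero' := by simp
          map_add' := fun B B' => by simp }
      map_one' := by
        ext B f y
        change B f (1⁻¹ * y) = B f y
        simp
      map_mul' := fun g h => by
        ext B f y
        change B f ((g * h)⁻¹ * y) = B f (h⁻¹ * (g⁻¹ * y))
        simp [mul_assoc] }
  obtain ⟨D, h1, h2⟩ := exists_deriv (FreeGroupBasis.ofFreeGroup X) ρ (fun x => Pr x)
  refine ⟨D, fun x => ?_, h2⟩
  have := h1 x
  simpa using this

noncomputable def Dop (g : FreeGroup X) : L2 (X × FreeGroup X) →L[ℝ] L2 (FreeGroup X) :=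
  (exists_Dop X).choose g

theorem Dop_of (x : X) (m : L2 (X × FreeGroup X)) (y : FreeGroup X) :
    Dop (FreeGroup.of x) m y = m (x, y) := by
  unfold Dop
  rw [(exists_Dop X).choose_spec.1, Pr_apply]

theorem isDer_Dop (m : L2 (X × FreeGroup X)) : IsDer (fun g y => Dop g m y) := by
  intro g h y
  unfold Dop
  simp only [(exists_Dop X).choose_spec.2 g h]
  rfl

theorem Dop_Rr (g u : FreeGroup X) (m : L2 (X × FreeGroup X)) (y : FreeGroup X) :
    Dop g (Rr X u m) y = Dop g m (y * u) := by
  refine der_ext (d := fun g y => Dop g (Rr X u m) y) (d' := fun g y => Dop g m (y * u))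
    (isDer_Dop _) ?_ ?_ g y
  · intro g h y
    simp only [isDer_Dop m g h (y * u), mul_assoc]
  · intro x y
    simp only [Dop_of, Rr_apply]

theorem exists_of_Pr {I G : Type} [Finite I] (v : I → L2 G) :
    ∃ m : L2 (I × G), ∀ i y, m (i, y) = v i y := by
  classical
  cases nonempty_fintype I
  refine ⟨∑ i, adjoint (Pr i) (v i), fun i y => ?_⟩
  rw [← inner_eb_right, sum_inner, Finset.sum_eq_single i]
  · rw [adjoint_inner_left, real_inner_comm]
    have : Pr i (eb (i, y)) = eb y := by
      refine ext_L2 fun z => ?_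
      rw [Pr_apply, eb_apply, eb_apply]
      by_cases h : z = y
      · rw [if_pos h, if_pos (by rw [h])]
      · rw [if_neg h, if_neg (fun h' => h (Prod.mk.inj h').2)]
    rw [this, inner_eb_left]
  · intro j _ hj
    rw [adjoint_inner_left]
    have : Pr j (eb (i, y)) = 0 := by
      refine ext_L2 fun z => ?_
      rw [Pr_apply, eb_apply, if_neg (fun h' => hj (Prod.mk.inj h').1)]
      rfl
    rw [this, inner_zero_right]
  · simp

theorem exists_Dop_aut [Finite X] (ψ : MulAut (FreeGroup X)) (m : L2 (X × FreeGroup X)) :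
    ∃ m' : L2 (X × FreeGroup X), ∀ g y, Dop g m' y = Dop (ψ.symm g) m (ψ.symm y) := by
  obtain ⟨m', hm'⟩ := exists_of_Pr (fun x : X =>
    compL ψ.symm ψ.symm.injective (Dop (ψ.symm (FreeGroup.of x)) m))
  refine ⟨m', fun g y => ?_⟩
  refine der_ext (d := fun g y => Dop g m' y) (d' := fun g y => Dop (ψ.symm g) m (ψ.symm y))
    (isDer_Dop _) ?_ ?_ g y
  · intro g h y
    simp only [map_mul, isDer_Dop m (ψ.symm g) (ψ.symm h) (ψ.symm y), map_inv]
  · intro x y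
    simp only [Dop_of, hm', compL_apply]

theorem exists_T {J : Type} [Finite J] (h : J → FreeGroup X) :
    ∃ T : L2 (X × FreeGroup X) →L[ℝ] L2 (J × FreeGroup X),
      ∀ m j y, T m (j, y) = Dop (h j) m y := by
  classical
  cases nonempty_fintype J
  refine ⟨∑ j, adjoint (Pr j) ∘L Dop (h j), fun m i y => ?_⟩
  rw [← inner_eb_right, _root_.sum_apply, sum_inner, Finset.sum_eq_single i]
  · rw [comp_apply, adjoint_inner_left, real_inner_comm]
    have : Pr i (eb (i, y)) = eb y := by
      refine ext_L2 fun z => ?_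
      rw [Pr_apply, eb_apply, eb_apply]
      by_cases h : z = y
      · rw [if_pos h, if_pos (by rw [h])]
      · rw [if_neg h, if_neg (fun h' => h (Prod.mk.inj h').2)]
    rw [this, inner_eb_left]
  · intro j _ hj
    rw [comp_apply, adjoint_inner_left]
    have : Pr j (eb (i, y)) = 0 := by
      refine ext_L2 fun z => ?_
      rw [Pr_apply, eb_apply, if_neg (fun h' => hj (Prod.mk.inj h').1)]
      rfl
    rw [this, inner_zero_right]
  · simp

end

end FixRank

namespace FixRank

open scoped ENNReal InnerProductSpace
open ContinuousLinearMap

theorem exists_retract {G : Type} [Group G] (P : Subgroup G) :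
    ∃ r : G → P, r 1 = 1 ∧ ∀ (p : P) g, r (p * g) = p * r g := by
  let rep : G → G := fun g => (Quotient.mk (QuotientGroup.rightRel P) g).out
  have h1 : ∀ g, g * (rep g)⁻¹ ∈ P := by
    intro g
    have : (QuotientGroup.rightRel P) (rep g) g := Quotient.mk_out (s := QuotientGroup.rightRel P) g
    exact QuotientGroup.rightRel_apply.1 this
  have h2 : ∀ (p : P) g, rep (p * g) = rep g := by
    intro p g
    have : Quotient.mk (QuotientGroup.rightRel P) (p * g) =
        Quotient.mk (QuotientGroup.rightRel P) g := by
      refine Quotient.sound ?_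
      refine QuotientGroup.rightRel_apply.2 ?_
      simp
    simp only [rep, this]
  let r0 : G → P := fun g => ⟨g * (rep g)⁻¹, h1 g⟩
  have h3 : ∀ (p : P) g, r0 (p * g) = p * r0 g := by
    intro p g
    apply Subtype.ext
    simp only [r0, h2, Subgroup.coe_mul, mul_assoc]
  refine ⟨fun g => r0 g * (r0 1)⁻¹, by simp, fun p g => ?_⟩
  simp only [h3, mul_assoc]

theorem exists_dual {X : Type} [Finite X] (P : Subgroup (FreeGroup X)) {ι : Type}
    (b : FreeGroupBasis ι P) {s : ℕ} (e : Fin s ↪ ι) (j : Fin s) (u : P) :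
    ∃ m : L2 (X × FreeGroup X), ∀ (i : Fin s) (q : P),
      (¬ (i = j ∧ q = u) → Dop (b (e i) : FreeGroup X) m q = 0) ∧
      (i = j → q = u → Dop (b (e i) : FreeGroup X) m q = 1) := by
  classical
  let ρ : P →* AddMonoid.End (P →₀ ℝ) :=
    { toFun := fun q => Finsupp.mapDomain.addMonoidHom (fun w => q * w)
      map_one' := by
        refine AddMonoidHom.ext fun a => ?_
        change Finsupp.mapDomain (fun w => 1 * w) a = a
        simp only [one_mul]
        exact Finsupp.mapDomain_id
      map_mul' := fun g h => by
        refine AddMonoidHom.ext fun a => ?_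
        change Finsupp.mapDomain (fun w => g * h * w) a =
          Finsupp.mapDomain (fun w => g * w) (Finsupp.mapDomain (fun w => h * w) a)
        rw [← Finsupp.mapDomain_comp]
        congr 1
        funext w
        simp [mul_assoc] }
  obtain ⟨D, hD1, hD2⟩ := exists_deriv b ρ (fun i => if i = e j then Finsupp.single u (1 : ℝ) else 0)
  have hρ : ∀ (q : P) (a : P →₀ ℝ), (ρ q⁻¹ a) 1 = a q := by
    intro q a
    have := Finsupp.mapDomain_apply (f := fun w : P => q⁻¹ * w) (mul_right_injective _) a q
    simp only [inv_mul_cancel] at this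
    exact this
  have hDone : D 1 = 0 := by
    have := hD2 1 1
    rw [map_one, mul_one] at this
    have h' : D 1 = D 1 + D 1 := this
    simpa using h'
  let f : P → ℝ := fun q => D q 1
  have hf : ∀ q w : P, f (q⁻¹ * w) = f q⁻¹ + D w q := by
    intro q w
    simp only [f, hD2, Finsupp.add_apply, hρ]
  obtain ⟨r, hr1, hr⟩ := exists_retract P
  let δ : FreeGroup X → FreeGroup X → ℝ := fun g y => f (r (y⁻¹ * g)) - f (r y⁻¹)
  have hδ : IsDer δ := by
    intro g h y
    simp only [δ, mul_inv_rev, inv_inv, mul_assoc]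
    ring
  have hδ2 : ∀ (g a : FreeGroup X) (q : P), δ g (a * q) = D (r (a⁻¹ * g)) q - D (r a⁻¹) q := by
    intro g a q
    have h1 : r ((a * q)⁻¹ * g) = q⁻¹ * r (a⁻¹ * g) := by
      rw [← hr, mul_inv_rev, mul_assoc]; rfl
    have h2 : r ((a * q)⁻¹) = q⁻¹ * r (a⁻¹) := by
      rw [← hr, mul_inv_rev]; rfl
    simp only [δ, h1, h2, hf]
    ring
  choose C hCfin hC using fun i => der_local (b (e i) : FreeGroup X)
  let Y : FreeGroup X → Prop := fun y => ∃ i, ∃ c ∈ C i, ∃ q : P, y = c * q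
  let m0 : X × FreeGroup X → ℝ := fun p => if Y p.2 then δ (FreeGroup.of p.1) p.2 else 0
  have hm0 : {p | m0 p ≠ 0}.Finite := by
    have hbig : (⋃ x : X, ⋃ i : Fin s, ⋃ c ∈ C i, (fun q : P => (x, c * (q : FreeGroup X))) ''
        ((D (r (c⁻¹ * FreeGroup.of x))).support ∪ (D (r c⁻¹)).support : Finset P)).Finite := by
      refine Set.finite_iUnion fun x => Set.finite_iUnion fun i => (hCfin i).biUnion fun c _ => ?_
      exact (Finset.finite_toSet _).image _
    refine hbig.subset ?_
    rintro ⟨x, y⟩ hp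
    have hp : m0 (x, y) ≠ 0 := hp
    by_cases hY : Y y
    · simp only [m0, if_pos hY] at hp
      obtain ⟨i, c, hc, q, rfl⟩ := hY
      simp only [Set.mem_iUnion]
      refine ⟨x, i, c, hc, q, ?_, rfl⟩
      rw [hδ2] at hp
      by_contra hq
      simp only [Finset.coe_union, Set.mem_union, Finset.mem_coe, Finsupp.mem_support_iff,
        not_or, not_not] at hq
      rw [hq.1, hq.2] at hp
      simp at hp
    · simp only [m0, if_neg hY] at hp
      exact absurd rfl hp
  let m : L2 (X × FreeGroup X) := ⟨m0, memL2_of_finite hm0⟩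
  have hm : ∀ x y, m (x, y) = m0 (x, y) := fun x y => rfl
  have key : ∀ (i : Fin s) (q : P), Dop (b (e i) : FreeGroup X) m q =
      (if e i = e j then Finsupp.single u (1 : ℝ) else 0) q := by
    intro i q
    have h1 := hC i _ (hδ.sub (isDer_Dop m)) q (by
      intro x c hc
      have hY : Y (c * q) := ⟨i, c, hc, q, rfl⟩
      simp only [Dop_of, hm, m0, if_pos hY, sub_self])
    have h2 := hδ2 (b (e i) : FreeGroup X) 1 q
    have h3 : r (b (e i) : FreeGroup X) = b (e i) := by
      have := hr (b (e i)) 1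
      rwa [mul_one, hr1, mul_one] at this
    rw [one_mul, inv_one, one_mul, hr1, hDone, h3, hD1] at h2
    simp only [Finsupp.coe_zero, Pi.zero_apply, sub_zero] at h2
    rw [← h2]
    linarith
  refine ⟨m, fun i q => ⟨fun h => ?_, fun h h' => ?_⟩⟩
  · rw [key]
    by_cases hij : i = j
    · have hq : q ≠ u := fun hq => h ⟨hij, hq⟩
      rw [if_pos (by rw [hij]), Finsupp.single_eq_of_ne hq]
    · rw [if_neg (fun h' => hij (e.injective h'))]
      rfl
  · rw [key, if_pos (by rw [h]), h', Finsupp.single_eq_same]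

def perS {G : Type} [Group G] (φ : MulAut G) : Subgroup G where
  carrier := {g | ∃ k : ℕ, 0 < k ∧ (φ ^ k) g = g}
  one_mem' := ⟨1, one_pos, map_one _⟩
  mul_mem' := by
    rintro a b ⟨k, hk, ha⟩ ⟨l, hl, hb⟩
    refine ⟨k * l, Nat.mul_pos hk hl, ?_⟩
    have h1 : a ∈ fixS (φ ^ (k * l)) := by
      rw [pow_mul]; exact fixS_le_pow _ _ ha
    have h2 : b ∈ fixS (φ ^ (k * l)) := by
      rw [mul_comm, pow_mul]; exact fixS_le_pow _ _ hb
    exact (fixS _).mul_mem h1 h2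
  inv_mem' := by
    rintro a ⟨k, hk, ha⟩
    exact ⟨k, hk, (fixS (φ ^ k)).inv_mem ha⟩

theorem mem_perS {G : Type} [Group G] {φ : MulAut G} {g : G} :
    g ∈ perS φ ↔ ∃ k : ℕ, 0 < k ∧ (φ ^ k) g = g := Iff.rfl

theorem exists_common_period {G : Type} [Group G] (φ : MulAut G) {s : ℕ} (h : Fin s → G)
    (hh : ∀ i, h i ∈ perS φ) : ∃ m : ℕ, 0 < m ∧ ∀ i, (φ ^ m) (h i) = h i := by
  choose k hk hk' using hh
  refine ⟨∏ i, k i, Finset.prod_pos fun i _ => hk i, fun i => ?_⟩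
  obtain ⟨c, hc⟩ := Finset.dvd_prod_of_mem k (Finset.mem_univ i)
  have : h i ∈ fixS (φ ^ (∏ i, k i)) := by
    rw [hc, pow_mul]
    exact fixS_le_pow _ _ (hk' i)
  exact this

theorem per_basis_le {X : Type} [Fintype X] (φ : MulAut (FreeGroup X)) {ι : Type}
    (b : FreeGroupBasis ι (perS φ)) {s : ℕ} (e : Fin s ↪ ι) : s ≤ Fintype.card X := by
  classical
  let h : Fin s → FreeGroup X := fun i => (b (e i) : FreeGroup X)
  obtain ⟨k, hk, hper⟩ := exists_common_period φ h (fun i => (b (e i)).2)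
  let ψ := φ ^ k
  have hψ : ∀ i, ψ (h i) = h i := hper
  have hψ' : ∀ i, ψ.symm (h i) = h i := fun i => by rw [MulEquiv.symm_apply_eq, hψ]
  obtain ⟨T, hT⟩ := exists_T h
  have hTe : Equivar T := by
    intro u f
    refine ext_L2 fun ⟨i, y⟩ => ?_
    rw [hT, Dop_Rr, Rr_apply, hT]
  let Φe : MulAut (FreeGroup X) → (Fin s × FreeGroup X ≃ Fin s × FreeGroup X) := fun θ =>
    (Equiv.refl (Fin s)).prodCongr θ.toEquiv
  let Φ : MulAut (FreeGroup X) → (L2 (Fin s × FreeGroup X) →L[ℝ] L2 (Fin s × FreeGroup X)) :=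
    fun θ => compL (Φe θ) (Φe θ).injective
  have hΦ : ∀ θ f i y, Φ θ f (i, y) = f (i, θ y) := fun θ f i y => rfl
  have hΦin : ∀ f g, ⟪Φ ψ f, g⟫_ℝ = ⟪f, Φ ψ.symm g⟫_ℝ := fun f g => inner_compL (Φe ψ) f g
  have hΦin' : ∀ f g, ⟪Φ ψ.symm f, g⟫_ℝ = ⟪f, Φ ψ g⟫_ℝ := fun f g => inner_compL (Φe ψ.symm) f g
  have hrange : ∀ m, ∃ m', T m' = Φ ψ.symm (T m) := by
    intro m
    obtain ⟨m', hm'⟩ := exists_Dop_aut ψ m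
    refine ⟨m', ext_L2 fun ⟨i, y⟩ => ?_⟩
    rw [hT, hm', hΦ, hT, hψ']
  have hrange' : ∀ m, ∃ m', T m' = Φ ψ (T m) := by
    intro m
    obtain ⟨m', hm'⟩ := exists_Dop_aut ψ.symm m
    refine ⟨m', ext_L2 fun ⟨i, y⟩ => ?_⟩
    rw [hT, hm', hΦ, hT, MulEquiv.symm_symm, hψ]
  let K : Submodule ℝ (L2 (Fin s × FreeGroup X)) := (LinearMap.range T.toLinearMap)ᗮ
  have hK : ∀ z, z ∈ K ↔ ∀ m, ⟪T m, z⟫_ℝ = 0 := by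
    intro z
    simp only [K, Submodule.mem_orthogonal]
    constructor
    · intro h m
      exact h _ ⟨m, rfl⟩
    · rintro h _ ⟨m, rfl⟩
      exact h m
  have hKc : CompleteSpace K :=
    (Submodule.isClosed_orthogonal (LinearMap.range T.toLinearMap)).completeSpace_coe
  have hKop : K.HasOrthogonalProjection := Submodule.HasOrthogonalProjection.ofCompleteSpace K
  have hKΦ : ∀ z ∈ K, Φ ψ z ∈ K := by
    intro z hz
    rw [hK] at hz ⊢
    intro m
    obtain ⟨m', hm'⟩ := hrange m
    rw [← hΦin', ← hm', hz]
  have hKΦ' : ∀ z ∈ K, Φ ψ.symm z ∈ K := by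
    intro z hz
    rw [hK] at hz ⊢
    intro m
    obtain ⟨m', hm'⟩ := hrange' m
    rw [← hΦin, ← hm', hz]
  -- elements of K supported on the periodic subgroup vanish
  have hKP : ∀ z ∈ K, (∀ i y, y ∉ perS φ → z (i, y) = 0) → z = 0 := by
    intro z hz hsupp
    refine ext_L2 fun ⟨j, y⟩ => ?_
    by_cases hy : y ∈ perS φ
    · obtain ⟨m, hm⟩ := exists_dual (perS φ) b e j ⟨y, hy⟩
      have h1 := (hK z).1 hz m
      rw [lp.inner_eq_tsum, tsum_eq_single (j, y)] at h1
      · have h2 : T m (j, y) = 1 := by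
          rw [hT]
          exact (hm j ⟨y, hy⟩).2 rfl rfl
        rw [h2] at h1
        simpa using h1
      · rintro ⟨i, y'⟩ hne
        by_cases hy' : y' ∈ perS φ
        · have h2 : T m (i, y') = 0 := by
            rw [hT]
            refine (hm i ⟨y', hy'⟩).1 ?_
            rintro ⟨rfl, h3⟩
            exact hne (Prod.ext rfl (congrArg Subtype.val h3))
          rw [h2, inner_zero_left]
        · rw [hsupp i y' hy', inner_zero_right]
    · exact hsupp j y hy
  -- the projections of basis vectors to K vanish
  have hproj : ∀ j : Fin s, ∀ z ∈ K, z (j, 1) = 0 := by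
    intro j
    obtain ⟨p, hpK, q, hqK, hpq⟩ := Submodule.exists_add_mem_mem_orthogonal (K := K)
      (eb (j, (1 : FreeGroup X)))
    have hΦe : Φ ψ (eb (j, (1 : FreeGroup X))) = eb (j, 1) := by
      refine ext_L2 fun ⟨i, y⟩ => ?_
      rw [hΦ, eb_apply, eb_apply]
      have hh : (i, ψ y) = (j, (1 : FreeGroup X)) ↔ (i, y) = (j, 1) := by
        rw [Prod.mk.injEq, Prod.mk.injEq, map_eq_one_iff ψ ψ.injective]
      by_cases h : (i, ψ y) = (j, (1 : FreeGroup X))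
      · rw [if_pos h, if_pos (hh.1 h)]
      · rw [if_neg h, if_neg (fun h' => h (hh.2 h'))]
    have hqΦ : Φ ψ q ∈ Kᗮ := by
      rw [Submodule.mem_orthogonal'] at hqK ⊢
      intro z hz
      rw [hΦin]
      exact hqK _ (hKΦ' z hz)
    have hpΦ : Φ ψ p = p := by
      have h1 : Φ ψ p + Φ ψ q = p + q := by rw [← map_add, ← hpq, hΦe]
      have h2 : Φ ψ p - p = q - Φ ψ q := by
        rw [sub_eq_sub_iff_add_eq_add, h1, add_comm]
      have h3 : Φ ψ p - p ∈ K := K.sub_mem (hKΦ p hpK) hpK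
      have h4 : Φ ψ p - p ∈ Kᗮ := by
        rw [h2]; exact Kᗮ.sub_mem hqK hqΦ
      have h5 := (Submodule.mem_orthogonal K _).1 h4 _ h3
      exact sub_eq_zero.1 (inner_self_eq_zero.1 h5)
    have hpow : ∀ (l : ℕ) i y, p (i, (ψ ^ l) y) = p (i, y) := by
      intro l
      induction l with
      | zero => intro i y; rfl
      | succ l ih =>
        intro i y
        rw [pow_succ, MulAut.mul_apply, ih, ← hΦ ψ p i y, hpΦ]
    have hp0 : p = 0 := by
      refine hKP p hpK fun i y hy => ?_
      have hinj : Function.Injective (fun l : ℕ => (i, (ψ ^ l) y)) := by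
        have aux : ∀ a c : ℕ, (ψ ^ a) y = (ψ ^ (a + (c + 1))) y → False := by
          intro a c hac
          rw [pow_add, MulAut.mul_apply] at hac
          have h1 := (ψ ^ a).injective hac
          refine hy ⟨k * (c + 1), Nat.mul_pos hk (Nat.succ_pos _), ?_⟩
          rw [pow_mul]
          exact h1.symm
        intro a c hac
        have hac : (ψ ^ a) y = (ψ ^ c) y := (Prod.mk.inj hac).2
        rcases lt_trichotomy a c with h1 | h1 | h1
        · obtain ⟨d, rfl⟩ := Nat.exists_eq_add_of_lt h1
          exact (aux a d hac).elim
        · exact h1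
        · obtain ⟨d, rfl⟩ := Nat.exists_eq_add_of_lt h1
          exact (aux c d hac.symm).elim
      have hsum := (summable_L2 p).comp_injective hinj
      have h2 : ((fun a => p a ^ 2) ∘ fun l : ℕ => (i, (ψ ^ l) y)) = fun _ : ℕ => p (i, y) ^ 2 := by
        funext l
        simp only [Function.comp, hpow]
      rw [h2, summable_const_iff] at hsum
      exact pow_eq_zero_iff two_ne_zero |>.1 hsum
    intro z hz
    rw [← inner_eb_right, hpq, hp0, zero_add]
    exact (Submodule.mem_orthogonal K _).1 hqK z hz
  have hKzero : ∀ z ∈ K, z = 0 := by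
    intro z hz
    refine ext_L2 fun ⟨j, y⟩ => ?_
    have h1 : Rr (Fin s) y z ∈ K := by
      rw [hK] at hz ⊢
      intro m
      rw [real_inner_comm, inner_Rr, ← hTe, real_inner_comm, hz]
    have h2 := hproj j _ h1
    rw [Rr_apply, one_mul] at h2
    exact h2
  have := dim_le hTe (fun z hz => hKzero z ((hK z).2 fun m => by
    rw [← adjoint_inner_right, hz, inner_zero_right]))
  simpa using this

theorem perS_basis {X : Type} [Fintype X] (φ : MulAut (FreeGroup X)) :
    HasBasisLE (perS φ) (Fintype.card X) :=
  HasBasisLE.of_bound (IsFreeGroup.basis (perS φ)) fun _ e => per_basis_le φ (IsFreeGroup.basis (perS φ)) e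

theorem exists_perS_eq {X : Type} [Fintype X] (φ : MulAut (FreeGroup X)) :
    ∃ m : ℕ, 0 < m ∧ perS φ = fixS (φ ^ m) := by
  obtain ⟨s, _, ⟨f⟩⟩ := perS_basis φ
  obtain ⟨m, hm, h⟩ := exists_common_period φ
    (fun i : Fin s => (f (FreeGroup.of i) : FreeGroup X)) (fun i => (f (FreeGroup.of i)).2)
  refine ⟨m, hm, le_antisymm (fun g hg => ?_) (fun g hg => ⟨m, hm, hg⟩)⟩
  have h1 : ((φ ^ m).toMonoidHom.comp (perS φ).subtype).comp f.toMonoidHom =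
      (perS φ).subtype.comp f.toMonoidHom := by
    ext i
    exact h i
  have h2 := DFunLike.congr_fun h1 (f.symm ⟨g, hg⟩)
  rw [mem_fixS]
  simpa using h2

theorem fixS_basis {X : Type} [Fintype X] (φ : MulAut (FreeGroup X)) :
    HasBasisLE (fixS φ) (Fintype.card X) := by
  obtain ⟨m, hm, h⟩ := exists_perS_eq φ
  have h1 := perS_basis φ
  rw [h] at h1
  exact HasBasisLE.fix_of_pow m hm.ne' φ h1

end FixRank

/-- (Bestvina–Handel) The fixed subgroup of an automorphism of `F_n` has rank at most `n`. -/
theorem fixedSubgroup_rank_le (n : ℕ) (φ : FreeGroup (Fin n) ≃* FreeGroup (Fin n)) :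
    rk (fixedSubgroup φ.toMonoidHom) ≤ n := by
  obtain ⟨s, hs, ⟨f⟩⟩ := FixRank.fixS_basis (X := Fin n) φ
  rw [Fintype.card_fin] at hs
  let S : Set (FreeGroup (Fin n)) :=
    Set.range (fun i : Fin s => (f (FreeGroup.of i) : FreeGroup (Fin n)))
  have hS : Subgroup.closure S = fixedSubgroup φ.toMonoidHom := by
    have h1 : S = ((FixRank.fixS φ).subtype.comp f.toMonoidHom) '' Set.range FreeGroup.of := by
      rw [← Set.range_comp]
      rfl
    rw [h1, ← MonoidHom.map_closure, FreeGroup.closure_range_of, ← MonoidHom.range_eq_map]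
    ext g
    constructor
    · rintro ⟨x, rfl⟩
      exact (f x).2
    · intro hg
      exact ⟨f.symm ⟨g, hg⟩, by simp⟩
  have h2 : Cardinal.mk S ≤ s := by
    refine Cardinal.mk_range_le.trans ?_
    simp
  have h3 : rk (fixedSubgroup φ.toMonoidHom) ≤ Cardinal.mk S :=
    ciInf_le' (fun S : {S : Set (FreeGroup (Fin n)) //
      Subgroup.closure S = fixedSubgroup φ.toMonoidHom} => Cardinal.mk S.1) ⟨S, hS⟩
  exact h3.trans (h2.trans (by exact_mod_cast hs))
end

section
/- For every automorphism φ of the free group F_n of finite rank n, the fixed subgroup Fix(φ) = {g ∈ F_n : φ(g) = g} is finitely generated. -/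
namespace GT

/-- Two points merge under forward iteration. -/
def Merge {G : Type*} (f : G → G) (p q : G) : Prop := ∃ m n : ℕ, f^[m] p = f^[n] q

theorem Merge.symm {G : Type*} {f : G → G} {p q : G} (h : Merge f p q) : Merge f q p := by
  obtain ⟨m, n, h⟩ := h
  exact ⟨n, m, h.symm⟩

theorem Merge.trans {G : Type*} {f : G → G} {p q r : G} (h : Merge f p q) (h' : Merge f q r) :
    Merge f p r := by
  obtain ⟨m, n, h⟩ := h
  obtain ⟨m', n', h'⟩ := h'
  refine ⟨m' + m, n + n', ?_⟩
  rw [Function.iterate_add_apply, h, Function.iterate_add_apply, ← h',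
    ← Function.iterate_add_apply, ← Function.iterate_add_apply, add_comm]

theorem iter_equiv {G : Type*} [Group G] {H : Subgroup G} {f : G → G}
    (hf : ∀ h ∈ H, ∀ p, f (h * p) = h * f p) (m : ℕ) :
    ∀ h ∈ H, ∀ p, f^[m] (h * p) = h * f^[m] p := by
  induction m with
  | zero => intro h _ p; rfl
  | succ k ih =>
    intro h hh p
    rw [Function.iterate_succ_apply, hf h hh, ih h hh, ← Function.iterate_succ_apply]

theorem Merge.smul {G : Type*} [Group G] {H : Subgroup G} {f : G → G}
    (hf : ∀ h ∈ H, ∀ p, f (h * p) = h * f p) {p q h : G} (hh : h ∈ H) (hm : Merge f p q) :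
    Merge f (h * p) (h * q) := by
  obtain ⟨m, n, e⟩ := hm
  exact ⟨m, n, by rw [iter_equiv hf _ h hh, iter_equiv hf _ h hh, e]⟩

/-- shifting a relation -/
theorem shift {G : Type*} [Group G] {H : Subgroup G} {f : G → G}
    (hf : ∀ h ∈ H, ∀ p, f (h * p) = h * f p) {p h : G} (hh : h ∈ H) {m n : ℕ}
    (e : h * f^[m] p = f^[n] p) (k : ℕ) : h * f^[k + m] p = f^[k + n] p := by
  rw [Function.iterate_add_apply, Function.iterate_add_apply, ← e, iter_equiv hf _ h hh]

/-- The graph of the translation-length relation. -/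
def rel {G : Type*} [Group G] (H : Subgroup G) (f : G → G)
    (hf : ∀ h ∈ H, ∀ p, f (h * p) = h * f p) (p : G) : Subgroup (G × Multiplicative ℤ) where
  carrier := {x | x.1 ∈ H ∧ ∃ m n : ℕ, x.1 * f^[m] p = f^[n] p ∧
    (n : ℤ) - m = Multiplicative.toAdd x.2}
  one_mem' := ⟨H.one_mem, 0, 0, by simp, by simp⟩
  mul_mem' := by
    rintro ⟨h, z⟩ ⟨g, w⟩ ⟨hh, m, n, e, ez⟩ ⟨hg, m', n', e', ew⟩
    refine ⟨H.mul_mem hh hg, m + m', n' + n, ?_, ?_⟩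
    · have h1 := shift hf hg e' m
      have h2 := shift hf hh e n'
      simp only [Prod.fst_mul] at *
      rw [mul_assoc, h1, add_comm m n', h2]
    · simp only [Prod.snd_mul, toAdd_mul] at *
      push_cast
      omega
  inv_mem' := by
    rintro ⟨h, z⟩ ⟨hh, m, n, e, ez⟩
    refine ⟨H.inv_mem hh, n, m, ?_, ?_⟩
    · simp only [Prod.fst_inv] at *
      rw [← e, inv_mul_cancel_left]
    · simp only [Prod.snd_inv, toAdd_inv] at *
      omega

theorem stab_fg {G : Type*} [Group G] (H : Subgroup G) (f : G → G)
    (hf : ∀ h ∈ H, ∀ p, f (h * p) = h * f p) (p : G) :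
    ∃ S : Subgroup G, S.FG ∧ S ≤ H ∧ ∀ h ∈ H, Merge f (h * p) p → h ∈ S := by
  have hinj : Function.Injective
      ((MonoidHom.snd G (Multiplicative ℤ)).comp (rel H f hf p).subtype) := by
    rintro ⟨⟨h, z⟩, hh, m, n, e, ez⟩ ⟨⟨g, w⟩, hg, m', n', e', ew⟩ hzw
    simp only [MonoidHom.comp_apply, Subgroup.subtype_apply, MonoidHom.coe_snd] at *
    subst hzw
    have h1 := shift hf hh e m'
    have h2 := shift hf hg e' m
    dsimp only at ez ew
    have : m' + n = m + n' := by omega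
    rw [this, ← h2, add_comm] at h1
    have := mul_right_cancel h1
    subst this
    rfl
  have hc : IsCyclic (rel H f hf p) := isCyclic_of_injective _ hinj
  have hfg : Group.FG (rel H f hf p) := by
    obtain ⟨g, hg⟩ := hc.exists_generator
    exact Group.fg_iff.2 ⟨{g}, by
      rw [eq_top_iff, ← Subgroup.zpowers_eq_closure]; exact fun x _ => hg x,
      Set.finite_singleton _⟩
  rw [Group.fg_iff_subgroup_fg] at hfg
  refine ⟨(rel H f hf p).map (MonoidHom.fst _ _), ?_, ?_, ?_⟩
  · rw [Subgroup.fg_iff] at hfg ⊢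
    obtain ⟨S, hS, hfin⟩ := hfg
    exact ⟨_, by rw [← hS, MonoidHom.map_closure], hfin.image _⟩
  · rintro _ ⟨x, hx, rfl⟩
    exact hx.1
  · rintro h hh ⟨m, n, e⟩
    rw [iter_equiv hf _ h hh] at e
    exact ⟨(h, Multiplicative.ofAdd ((n : ℤ) - m)), ⟨hh, m, n, e, rfl⟩, rfl⟩

theorem trans_fg {G : Type*} [Group G] (H : Subgroup G) (f : G → G)
    (hf : ∀ h ∈ H, ∀ p, f (h * p) = h * f p) (p q : G) :
    ∃ S : Subgroup G, S.FG ∧ S ≤ H ∧ ∀ h ∈ H, Merge f (h * p) q → h ∈ S := by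
  by_cases hex : ∃ h ∈ H, Merge f (h * p) q
  · obtain ⟨h0, hh0, hm0⟩ := hex
    obtain ⟨S, hS, hSH, hmem⟩ := stab_fg H f hf p
    refine ⟨Subgroup.closure {h0} ⊔ S,
      Subgroup.FG.sup ((Subgroup.fg_iff _).2 ⟨_, rfl, Set.finite_singleton _⟩) hS,
      sup_le (by simpa using hh0) hSH, ?_⟩
    intro h hh hm
    have h1 : Merge f (h0⁻¹ * (h * p)) (h0⁻¹ * (h0 * p)) :=
      (hm.trans hm0.symm).smul hf (H.inv_mem hh0)
    rw [inv_mul_cancel_left, ← mul_assoc] at h1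
    have h2 := hmem _ (H.mul_mem (H.inv_mem hh0) hh) h1
    have h3 : h = h0 * (h0⁻¹ * h) := by group
    rw [h3]
    exact Subgroup.mul_mem _ (Subgroup.mem_sup_left (Subgroup.subset_closure rfl))
      (Subgroup.mem_sup_right h2)
  · refine ⟨⊥, Subgroup.FG.bot, bot_le, fun h hh hm => (hex ⟨h, hh, hm⟩).elim⟩

theorem abstract_fg {G : Type*} [Group G] (H : Subgroup G) (f : G → G)
    (hf : ∀ h ∈ H, ∀ p, f (h * p) = h * f p) (X P : Set G) (hX : X.Finite) (hP : P.Finite)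
    (hgen : Submonoid.closure X = ⊤) (h1 : 1 ∈ P)
    (hbad : ∀ p, ∀ x ∈ X, f p = p * x ∨ f (p * x) = p ∨
      ((∃ h ∈ H, ∃ q ∈ P, p = h * q) ∧ (∃ h ∈ H, ∃ q ∈ P, p * x = h * q))) : H.FG := by
  choose T hTfg hTH hT using trans_fg H f hf
  let E : Set G := (fun y : (G × G) × G => y.1.1 * y.1.2 * y.2⁻¹) '' ((P ×ˢ X) ×ˢ P) ∩ H
  have hE : E.Finite := (((hP.prod hX).prod hP).image _).inter_of_left _
  let K : Subgroup G := (⨆ p ∈ P, ⨆ q ∈ P, T p q) ⊔ Subgroup.closure E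
  have hKfg : K.FG := by
    refine Subgroup.FG.sup ?_ ((Subgroup.fg_iff _).2 ⟨_, rfl, hE⟩)
    exact Subgroup.FG.biSup hP _ fun p _ => Subgroup.FG.biSup hP _ fun q _ => hTfg p q
  have hKH : K ≤ H := by
    refine sup_le (iSup₂_le fun p _ => iSup₂_le fun q _ => hTH p q) ?_
    rw [Subgroup.closure_le]
    exact Set.inter_subset_right
  have hTK : ∀ p ∈ P, ∀ q ∈ P, T p q ≤ K := fun p hp q hq =>
    le_trans (le_trans (le_iSup₂ (f := fun q (_ : q ∈ P) => T p q) q hq)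
      (le_iSup₂ (f := fun p (_ : p ∈ P) => ⨆ q ∈ P, T p q) p hp)) le_sup_left
  have hkey : ∀ h ∈ H, ∀ k ∈ K, ∀ p ∈ P, ∀ q ∈ P, Merge f (h * p) (k * q) → h ∈ K := by
    intro h hh k hk p hp q hq hm
    have h2 := hm.smul hf (H.inv_mem (hKH hk))
    rw [inv_mul_cancel_left, ← mul_assoc] at h2
    have h3 := hTK p hp q hq (hT _ _ _ (H.mul_mem (H.inv_mem (hKH hk)) hh) h2)
    have h4 : h = k * (k⁻¹ * h) := by group
    rw [h4]
    exact K.mul_mem hk h3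
  have hall : ∀ p : G, ∃ k ∈ K, ∃ q ∈ P, Merge f p (k * q) := by
    intro p
    have hp : p ∈ Submonoid.closure X := by rw [hgen]; trivial
    induction hp using Submonoid.closure_induction_right with
    | one => exact ⟨1, K.one_mem, 1, h1, 0, 0, by simp⟩
    | mul_right p hp x hx ih =>
      obtain ⟨k, hk, q, hq, hm⟩ := ih
      rcases hbad p x hx with h | h | ⟨⟨h, hh, r, hr, e⟩, ⟨h', hh', r', hr', e'⟩⟩
      · exact ⟨k, hk, q, hq, Merge.trans ⟨0, 1, h.symm⟩ hm⟩
      · exact ⟨k, hk, q, hq, Merge.trans ⟨1, 0, h⟩ hm⟩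
      · have hK : h ∈ K := hkey h hh k hk r hr q hq (e ▸ hm)
        have hK' : h⁻¹ * h' ∈ K := by
          refine Subgroup.mem_sup_right (Subgroup.subset_closure ⟨⟨((r, x), r'), ?_, ?_⟩,
            H.mul_mem (H.inv_mem hh) hh'⟩)
          · exact ⟨⟨hr, hx⟩, hr'⟩
          · have : r * x = h⁻¹ * h' * r' := by rw [mul_assoc, ← e', e]; group
            simp [this]
        refine ⟨h', ?_, r', hr', 0, 0, by simpa using e'⟩
        have h4 : h' = h * (h⁻¹ * h') := by group
        rw [h4]
        exact K.mul_mem hK hK'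
  have : H = K := by
    refine le_antisymm (fun h hh => ?_) hKH
    obtain ⟨k, hk, q, hq, hm⟩ := hall h
    exact hkey h hh k hk 1 h1 q hq (by simpa using hm)
  rw [this]
  exact hKfg

open FreeGroup

variable {α : Type*} [DecidableEq α]

theorem head_reduce_append (v : List (α × Bool)) : ∀ u : List (α × Bool), IsReduced u →
    v.length < u.length → (reduce (u ++ v)).head? = u.head? := by
  induction v with
  | nil => intro u hu _; rw [List.append_nil, hu.reduce_eq]
  | cons c v ih =>
    intro u hu hl
    rcases List.eq_nil_or_concat u with rfl | ⟨u', d, rfl⟩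
    · simp at hl
    rw [List.concat_eq_append] at *
    simp only [List.length_append, List.length_cons, List.length_nil] at hl
    obtain ⟨c1, c2⟩ := c
    obtain ⟨d1, d2⟩ := d
    by_cases hcd : d1 = c1 → d2 = c2
    · have hred : IsReduced (u' ++ [(d1, d2)] ++ [(c1, c2)]) :=
        IsReduced.append_overlap hu (by simpa using hcd) (by simp)
      have := ih _ hred (by simp; omega)
      rw [List.append_assoc, List.singleton_append] at this
      rw [this]
      cases u' <;> simp
    · push Not at hcd
      obtain ⟨rfl, hne⟩ := hcd
      have hc2 : c2 = !d2 := by cases c2 <;> cases d2 <;> simp_all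
      subst hc2
      have hstep : Red.Step (u' ++ [(d1, d2)] ++ (d1, !d2) :: v) (u' ++ v) := by
        rw [List.append_assoc, List.singleton_append]
        exact Red.Step.not
      rw [reduce.Step.eq hstep, ih u' (hu.infix (List.prefix_append _ _).isInfix) (by omega)]
      cases u' with
      | nil => simp at hl
      | cons a t => simp

/-- first letter as a group element -/
def first (g : FreeGroup α) : FreeGroup α := mk g.toWord.head?.toList

theorem first_of_head {g : FreeGroup α} {a : α × Bool} (h : g.toWord.head? = some a) :
    first g = mk [a] := by
  simp [first, h]

theorem edge (g y : FreeGroup α) (a : α) (b : Bool) (hy : y.norm ≤ g.norm) :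
    first g = mk [(a, b)] ∨ first ((mk [(a, b)])⁻¹ * g * y) = (mk [(a, b)])⁻¹ := by
  by_cases h : g.toWord.head? = some (a, b)
  · exact Or.inl (first_of_head h)
  right
  have hred : IsReduced ((a, !b) :: g.toWord) := by
    have := isReduced_toWord (x := g)
    revert h this
    cases g.toWord with
    | nil => simp
    | cons c t =>
      obtain ⟨c1, c2⟩ := c
      intro h1 h2
      rw [isReduced_cons_cons]
      refine ⟨?_, h2⟩
      rintro rfl
      simp at h1
      cases b <;> cases c2 <;> simp_all
  have hinv : (mk [(a, b)])⁻¹ = mk [(a, !b)] := by simp [inv_mk, invRev]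
  rw [hinv]
  apply first_of_head
  have hmk : mk [(a, !b)] * g * y = mk (((a, !b) :: g.toWord) ++ y.toWord) := by
    conv_lhs => rw [← mk_toWord (x := g), ← mk_toWord (x := y), mul_mk, mul_mk]
    simp
  rw [hmk, toWord_mk, head_reduce_append _ _ hred]
  · simp
  · simp only [FreeGroup.norm] at hy
    simp only [List.length_cons]
    omega

theorem ball_finite [Finite α] (N : ℕ) : {g : FreeGroup α | g.norm ≤ N}.Finite := by
  have := (List.finite_length_le (α × Bool) N).preimage
    (f := (toWord : FreeGroup α → _)) toWord_injective.injOn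
  exact this

theorem fix_fg [Finite α] (φ : FreeGroup α →* FreeGroup α) : (fixedSubgroup φ).FG := by
  let X : Set (FreeGroup α) := Set.range fun a : α × Bool => mk [a]
  have hX : X.Finite := Set.finite_range _
  obtain ⟨M, hM⟩ : ∃ M, ∀ x ∈ X, (φ x).norm ≤ M := by
    obtain ⟨M, hM⟩ := (hX.image fun x => (φ x).norm).bddAbove
    exact ⟨M, fun x hx => hM ⟨x, hx, rfl⟩⟩
  let δ : FreeGroup α → FreeGroup α := fun p => p⁻¹ * φ p
  have hfin : (Set.range δ ∩ {g | g.norm ≤ M + M + 1}).Finite :=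
    (ball_finite _).inter_of_right _
  let P : Set (FreeGroup α) :=
    insert 1 (Function.invFun δ '' (Set.range δ ∩ {g | g.norm ≤ M + M + 1}))
  have hP : P.Finite := (hfin.image _).insert _
  have hPrep : ∀ p, (δ p).norm ≤ M + M + 1 → ∃ h ∈ fixedSubgroup φ, ∃ q ∈ P, p = h * q := by
    intro p hp
    have hq : δ (Function.invFun δ (δ p)) = δ p := Function.invFun_eq ⟨p, rfl⟩
    refine ⟨p * (Function.invFun δ (δ p))⁻¹, ?_, Function.invFun δ (δ p),
      Or.inr ⟨_, ⟨⟨p, rfl⟩, hp⟩, rfl⟩, by group⟩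
    generalize Function.invFun δ (δ p) = q at hq
    change φ (p * q⁻¹) = p * q⁻¹
    have hq' : q⁻¹ * φ q = p⁻¹ * φ p := hq
    have : φ p = p * (q⁻¹ * φ q) := by rw [hq']; group
    rw [_root_.map_mul, _root_.map_inv, this]
    group
  refine abstract_fg (fixedSubgroup φ) (fun p => p * first (δ p)) ?_ X P hX hP ?_
    (Set.mem_insert _ _) ?_
  · intro h hh p
    have hh' : φ h = h := hh
    have : δ (h * p) = δ p := by
      simp only [δ, _root_.map_mul, hh']
      group
    simp only [this, mul_assoc]
  · rw [eq_top_iff]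
    intro g _
    rw [← mk_toWord (x := g)]
    induction g.toWord with
    | nil => exact Submonoid.one_mem _
    | cons a t ih =>
      have : mk (a :: t) = mk [a] * mk t := by simp
      rw [this]
      exact Submonoid.mul_mem _ (Submonoid.subset_closure ⟨a, rfl⟩) ih
  · rintro p _ ⟨⟨a, b⟩, rfl⟩
    have hx : (φ (mk [(a, b)])).norm ≤ M := hM _ ⟨(a, b), rfl⟩
    have hx1 : (mk [(a, b)]).norm ≤ 1 := norm_mk_le
    have hδ : δ (p * mk [(a, b)]) = (mk [(a, b)])⁻¹ * δ p * φ (mk [(a, b)]) := by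
      simp only [δ, _root_.map_mul]
      group
    beta_reduce
    by_cases hn : (δ p).norm ≤ M
    · right; right
      refine ⟨hPrep p (by omega), hPrep _ ?_⟩
      rw [hδ]
      have e1 := norm_mul_le ((mk [(a, b)])⁻¹ * δ p) (φ (mk [(a, b)]))
      have e2 := norm_mul_le ((mk [(a, b)])⁻¹) (δ p)
      rw [norm_inv_eq] at e2
      omega
    · rcases edge (δ p) (φ (mk [(a, b)])) a b (by omega) with h | h
      · left; rw [h]
      · right; left
        rw [hδ, h]
        group

end GT

/-- (Gersten) The fixed subgroup of an automorphism of `F_n` is finitely generated. -/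
theorem fixedSubgroup_fg (n : ℕ) (φ : FreeGroup (Fin n) ≃* FreeGroup (Fin n)) :
    (fixedSubgroup φ.toMonoidHom).FG := by
  exact GT.fix_fg _
end
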